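/- Let I ⊆ ℂ[Mat_{m,n}] be a Knutson determinantal ideal: a contiguous determinantal ideal generated by the set 𝒢 of all d_i×d_i minors of submatrices U_i of the generic matrix Z, where each U_i has one of the four forms [1,a']×[1,b'] (northwest-justified), [a,m]×[b,n] (southeast-justified), [1,m]×[b,b'] (consecutive columns), or [a,a']×[1,n] (consecutive rows). Let ≺ be the antidiagonal lexicographic term order determined by the variable order z_{1n} ≻ z_{1,n−1} ≻ … ≻ z_{11} ≻ z_{2n} ≻ … ≻ z_{m1}. Then 𝒢 is a Gröbner basis for I with respect to ≺ (so I is Gröbner-determinantal), and consequently I is (𝐈,𝐉,≺)-bicrystalline for every Levi datum (𝐈,𝐉) such that I is L_𝐈×L_𝐉-stable. -/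

import Mathlib

namespace GCS

/-- Given a labelled word whose letter `cl` plays the role of a closing bracket `)` and
whose letter `op` plays the role of an opening bracket `(`, with `o` the number of currently
unmatched opening brackets seen so far, return the label of the rightmost unmatched
closing bracket (or `none` if every closing bracket is matched). -/
def lastUnmatched {β : Type} (cl op : ℕ) : List (ℕ × β) → ℕ → Option β
  | [], _ => none
  | (a, lbl) :: rest, o =>
    if a = cl then
      if o = 0 then
        match lastUnmatched cl op rest 0 with
        | some x => some x
        | none => some lbl
      else lastUnmatched cl op rest (o - 1)
    else if a = op then lastUnmatched cl op rest (o + 1)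
    else lastUnmatched cl op rest o

variable {m n : ℕ}

/-- The labelled row word of a matrix of nonnegative integers: read the columns left to
right, each column top to bottom, recording `M r c` copies of the (1-based) row index
`r + 1`, each labelled by its column `c`. -/
def rowWordLbl (M : Matrix (Fin m) (Fin n) ℕ) : List (ℕ × Fin n) :=
  (List.finRange n).flatMap fun c =>
    (List.finRange m).flatMap fun r => List.replicate (M r c) (r.1 + 1, c)

/-- The row word `row(M)` (letters are 1-based row indices). -/
def rowWord (M : Matrix (Fin m) (Fin n) ℕ) : List ℕ := (rowWordLbl M).map Prod.fst

/-- The column word `col(M) = row(Mᵀ)`. -/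
def colWord (M : Matrix (Fin m) (Fin n) ℕ) : List ℕ := rowWord M.transpose

/-- The lowering bicrystal operator `f_i^row` (here `i` is the 1-based row index,
`1 ≤ i ≤ m - 1`): locate the rightmost unmatched `)` in `bracket_i(row(M))`, coming from an
entry in row `i` and some column `c`; decrease that entry by one and increase the entry of
row `i+1`, column `c` by one.  Returns `none` if every `)` is matched. -/
def frow (i : ℕ) (M : Matrix (Fin m) (Fin n) ℕ) : Option (Matrix (Fin m) (Fin n) ℕ) :=
  (lastUnmatched i (i + 1) (rowWordLbl M) 0).map fun c =>
    Matrix.of fun a b =>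
      if a.1 + 1 = i ∧ b = c then M a b - 1
      else if a.1 + 1 = i + 1 ∧ b = c then M a b + 1
      else M a b

/-- The raising bicrystal operator `e_i^row`: locate the leftmost unmatched `(` in
`bracket_i(row(M))`, coming from an entry in row `i+1` and some column `c`; decrease that
entry by one and increase the entry of row `i`, column `c` by one. -/
def erow (i : ℕ) (M : Matrix (Fin m) (Fin n) ℕ) : Option (Matrix (Fin m) (Fin n) ℕ) :=
  (lastUnmatched (i + 1) i (rowWordLbl M).reverse 0).map fun c =>
    Matrix.of fun a b =>
      if a.1 + 1 = i + 1 ∧ b = c then M a b - 1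
      else if a.1 + 1 = i ∧ b = c then M a b + 1
      else M a b

/-- `f_j^col(M) = (f_j^row(Mᵀ))ᵀ`. -/
def fcol (j : ℕ) (M : Matrix (Fin m) (Fin n) ℕ) : Option (Matrix (Fin m) (Fin n) ℕ) :=
  (frow j M.transpose).map Matrix.transpose

/-- `e_j^col(M) = (e_j^row(Mᵀ))ᵀ`. -/
def ecol (j : ℕ) (M : Matrix (Fin m) (Fin n) ℕ) : Option (Matrix (Fin m) (Fin n) ℕ) :=
  (erow j M.transpose).map Matrix.transpose

/-- `I` is (the set of cut indices of) a Levi datum for size `m`: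
`I = {0 = i_0 < i_1 < ⋯ < i_r = m}`. -/
def IsLeviDatum (m : ℕ) (I : Finset ℕ) : Prop := 0 ∈ I ∧ m ∈ I ∧ ∀ x ∈ I, x ≤ m

/-- The admissible bicrystal operators for the Levi datum `(𝐈, 𝐉)` are
`f_i^row, e_i^row` for `i ∉ 𝐈` and `f_j^col, e_j^col` for `j ∉ 𝐉`. -/
def AdmissibleOp (m n : ℕ) (I J : Finset ℕ)
    (φ : Matrix (Fin m) (Fin n) ℕ → Option (Matrix (Fin m) (Fin n) ℕ)) : Prop :=
  (∃ i, 0 < i ∧ i < m ∧ i ∉ I ∧ (φ = frow i ∨ φ = erow i)) ∨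
  (∃ j, 0 < j ∧ j < n ∧ j ∉ J ∧ (φ = fcol j ∨ φ = ecol j))

/-- A set `S` of exponent matrices is `(𝐈,𝐉)`-bicrystal closed if `φ(M) ∈ S ∪ {∅}` for
every admissible operator `φ` and every `M ∈ S`. -/
def BicrystalClosed (m n : ℕ) (I J : Finset ℕ) (S : Set (Matrix (Fin m) (Fin n) ℕ)) : Prop :=
  ∀ φ, AdmissibleOp m n I J φ → ∀ M ∈ S, ∀ N, φ M = some N → N ∈ S

/-- A term order on monomials in variables indexed by `σ`: a linear order on exponent
vectors compatible with addition and having `0` (i.e. the monomial `1`) as minimum. -/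
structure TermOrder (σ : Type) where
  le : (σ →₀ ℕ) → (σ →₀ ℕ) → Prop
  le_refl : ∀ u, le u u
  le_trans : ∀ u v w, le u v → le v w → le u w
  le_antisymm : ∀ u v, le u v → le v u → u = v
  le_total : ∀ u v, le u v ∨ le v u
  add_le_add : ∀ u v w, le u v → le (u + w) (v + w)
  zero_le : ∀ u, le 0 u

/-- `u` is the exponent vector of the initial term `init_≺ f`: it lies in the support of
`f` and is `≺`-largest among the monomials of `f`.  (If `f = 0`, no `u` satisfies this.) -/
def IsInitExp {σ : Type} (ord : TermOrder σ) (f : MvPolynomial σ ℂ) (u : σ →₀ ℕ) : Prop :=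
  u ∈ f.support ∧ ∀ v ∈ f.support, ord.le v u

/-- The initial ideal `init_≺ I = ⟨init_≺ f : f ∈ I, f ≠ 0⟩`. -/
noncomputable def initialIdeal {σ : Type} (ord : TermOrder σ) (I : Ideal (MvPolynomial σ ℂ)) :
    Ideal (MvPolynomial σ ℂ) :=
  Ideal.span {p | ∃ f ∈ I, ∃ u, IsInitExp ord f u ∧ p = MvPolynomial.monomial u (1 : ℂ)}

/-- The exponent vector of the monomial `z^M` attached to the matrix `M`. -/
noncomputable def expOf (M : Matrix (Fin m) (Fin n) ℕ) : (Fin m × Fin n) →₀ ℕ :=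
  Finsupp.equivFunOnFinite.symm fun p => M p.1 p.2

/-- `Mat_≺ I`, the set of exponent matrices of monomials lying in `init_≺ I`. -/
def matLT (ord : TermOrder (Fin m × Fin n)) (I : Ideal (MvPolynomial (Fin m × Fin n) ℂ)) :
    Set (Matrix (Fin m) (Fin n) ℕ) :=
  {M | MvPolynomial.monomial (expOf M) (1 : ℂ) ∈ initialIdeal ord I}

/-- Indices `a`, `b` (0-based) lie in the same diagonal block determined by the cuts `I`. -/
def SameBlock (I : Finset ℕ) (a b : ℕ) : Prop := ∀ i ∈ I, (a < i ↔ b < i)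

/-- `g` belongs to the block-diagonal Levi subgroup `L_𝐈 ≤ GL_m`: `g` is invertible and
vanishes outside the diagonal blocks cut out by `I`. -/
def InLevi {m : ℕ} (I : Finset ℕ) (g : Matrix (Fin m) (Fin m) ℂ) : Prop :=
  IsUnit g ∧ ∀ a b : Fin m, ¬ SameBlock I a.1 b.1 → g a b = 0

/-- The action of the pair `(g, h)` on `ℂ[Mat_{m,n}]`: `((g,h)·f)(Z) = f(g Z hᵀ)`,
i.e. the substitution `z_{ab} ↦ ∑_{c,d} g_{ac} h_{bd} z_{cd}`. -/
noncomputable def leviAct (g : Matrix (Fin m) (Fin m) ℂ) (h : Matrix (Fin n) (Fin n) ℂ) :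
    MvPolynomial (Fin m × Fin n) ℂ →ₐ[ℂ] MvPolynomial (Fin m × Fin n) ℂ :=
  MvPolynomial.aeval fun p => ∑ c : Fin m, ∑ d : Fin n,
    MvPolynomial.C (g p.1 c * h p.2 d) * MvPolynomial.X (c, d)

/-- The ideal `Idl` is stable under the action of `L_𝐈 × L_𝐉`. -/
def LeviStable (I J : Finset ℕ) (Idl : Ideal (MvPolynomial (Fin m × Fin n) ℂ)) : Prop :=
  ∀ g h, InLevi I g → InLevi J h → ∀ f ∈ Idl, leviAct g h f ∈ Idl

/-- An `L_𝐈 × L_𝐉`-stable ideal `Idl` is `(𝐈,𝐉,≺)`-bicrystalline: the set of exponent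
matrices of the standard monomials (monomials not in `init_≺ Idl`) is bicrystal closed. -/
def IsBicrystalline (m n : ℕ) (I J : Finset ℕ) (ord : TermOrder (Fin m × Fin n))
    (Idl : Ideal (MvPolynomial (Fin m × Fin n) ℂ)) : Prop :=
  LeviStable I J Idl ∧ BicrystalClosed m n I J {M | M ∉ matLT ord Idl}

/-- `z^a` divides `z^b` entrywise, both optional values being defined. -/
def OptDvd (x y : Option (Matrix (Fin m) (Fin n) ℕ)) : Prop :=
  ∃ a b, x = some a ∧ y = some b ∧ ∀ p q, a p q ≤ b p q

/-- `T` is a test set for `(Idl, ≺, φ)`: a finite subset of `Mat_≺ Idl` such that for every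
`M ∈ Mat_≺ Idl` with `φ(M) ≠ ∅` there is `N ∈ T` with `φ(N) ≠ ∅`, `z^N ∣ z^M` and
`z^{φ(N)} ∣ z^{φ(M)}`. -/
def IsTestSet (ord : TermOrder (Fin m × Fin n)) (Idl : Ideal (MvPolynomial (Fin m × Fin n) ℂ))
    (φ : Matrix (Fin m) (Fin n) ℕ → Option (Matrix (Fin m) (Fin n) ℕ))
    (T : Set (Matrix (Fin m) (Fin n) ℕ)) : Prop :=
  T.Finite ∧ T ⊆ matLT ord Idl ∧
  ∀ M ∈ matLT ord Idl, (∃ M', φ M = some M') →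
    ∃ N ∈ T, (∀ p q, N p q ≤ M p q) ∧ OptDvd (φ N) (φ M)

/-- `T` is a test set that is minimal with respect to containment among all test sets. -/
def MinimalTestSet (ord : TermOrder (Fin m × Fin n))
    (Idl : Ideal (MvPolynomial (Fin m × Fin n) ℂ))
    (φ : Matrix (Fin m) (Fin n) ℕ → Option (Matrix (Fin m) (Fin n) ℕ))
    (T : Set (Matrix (Fin m) (Fin n) ℕ)) : Prop :=
  IsTestSet ord Idl φ T ∧ ∀ T', IsTestSet ord Idl φ T' → T' ⊆ T → T' = T

/-- The entry of `M` in 1-based row `r` and column `c` (0 outside the matrix). -/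
def entRow (M : Matrix (Fin m) (Fin n) ℕ) (r : ℕ) (c : Fin n) : ℕ :=
  if h : 1 ≤ r ∧ r ≤ m then M ⟨r - 1, by omega⟩ c else 0

/-- The generic `d × d` minor of `Z` with row set `r` and column set `c`. -/
noncomputable def genMinor (m n d : ℕ) (r : Fin d → Fin m) (c : Fin d → Fin n) :
    MvPolynomial (Fin m × Fin n) ℂ :=
  (Matrix.of fun i j : Fin d => MvPolynomial.X (r i, c j)).det

/-- The exponent vector of the antidiagonal term of the minor with rows `r`, columns `c`. -/
noncomputable def antidiagExp (m n d : ℕ) (r : Fin d → Fin m) (c : Fin d → Fin n) :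
    (Fin m × Fin n) →₀ ℕ :=
  ∑ i : Fin d, Finsupp.single (r i, c i.rev) 1

/-- `ord` is an antidiagonal term order: the lead term of every minor of the generic
matrix `Z` is its antidiagonal term. -/
def IsAntidiagonalOrder (m n : ℕ) (ord : TermOrder (Fin m × Fin n)) : Prop :=
  ∀ d, 0 < d → ∀ (r : Fin d → Fin m) (c : Fin d → Fin n), StrictMono r → StrictMono c →
    IsInitExp ord (genMinor m n d r c) (antidiagExp m n d r c)

/-- All `d × d` minors of the contiguous submatrix `[a,a'] × [b,b']` of `Z`
(1-based bounds). -/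
def minorsOfSub (m n : ℕ) (a a' b b' d : ℕ) : Set (MvPolynomial (Fin m × Fin n) ℂ) :=
  {p | ∃ (r : Fin d → Fin m) (c : Fin d → Fin n), StrictMono r ∧ StrictMono c ∧
    (∀ i, a ≤ (r i).1 + 1 ∧ (r i).1 + 1 ≤ a') ∧
    (∀ j, b ≤ (c j).1 + 1 ∧ (c j).1 + 1 ≤ b') ∧ p = genMinor m n d r c}

/-- `G` is a Gröbner basis of `Idl` with respect to `ord`:
`G ⊆ Idl` and `init_≺ Idl = ⟨init_≺ g : g ∈ G⟩`. -/
def IsGroebnerBasis (ord : TermOrder (Fin m × Fin n))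
    (Idl : Ideal (MvPolynomial (Fin m × Fin n) ℂ))
    (G : Set (MvPolynomial (Fin m × Fin n) ℂ)) : Prop :=
  G ⊆ (Idl : Set (MvPolynomial (Fin m × Fin n) ℂ)) ∧
  initialIdeal ord Idl =
    Ideal.span {p | ∃ g ∈ G, ∃ u, IsInitExp ord g u ∧ p = MvPolynomial.monomial u (1 : ℂ)}

/-- The priority of the variable `z_{ij}` in the variable order
`z_{1n} ≻ z_{1,n-1} ≻ ⋯ ≻ z_{11} ≻ z_{2n} ≻ ⋯ ≻ z_{m1}` (smaller rank = larger variable). -/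
def lexRank (m n : ℕ) (p : Fin m × Fin n) : ℕ := p.1.1 * n + (n - 1 - p.2.1)

/-- `ord` is the (antidiagonal) lexicographic term order determined by the variable order
`z_{1n} ≻ z_{1,n-1} ≻ ⋯ ≻ z_{11} ≻ z_{2n} ≻ ⋯ ≻ z_{m1}`. -/
def IsAntidiagLex (m n : ℕ) (ord : TermOrder (Fin m × Fin n)) : Prop :=
  ∀ u v, ord.le u v ↔
    u = v ∨ ∃ p, u p < v p ∧ ∀ q, lexRank m n q < lexRank m n p → u q = v q

/-- The rank function `r_v(i,j) = #{k ≤ i : v(k) ≤ j}` (1-based), at 0-based `(i,j)`. -/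
def rankP (N : ℕ) (v : Equiv.Perm (Fin N)) (i j : Fin N) : ℕ :=
  (Finset.univ.filter fun k : Fin N => k ≤ i ∧ v k ≤ j).card

/-- The antidiagonal drift `drift_v(i,j) = i + j - 1 - r_v(i,j)` (1-based), at 0-based
`(i,j)`. -/
def driftP (N : ℕ) (v : Equiv.Perm (Fin N)) (i j : Fin N) : ℕ :=
  i.1 + j.1 + 1 - rankP N v i j

/-- The specialized matrix `Z_v`: ones on the permutation positions, zeros southwest-ward
of them (positions `(i,j)` with `j > v(i)` or `i > v⁻¹(j)`), variables elsewhere. -/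
noncomputable def Zv (N : ℕ) (v : Equiv.Perm (Fin N)) :
    Matrix (Fin N) (Fin N) (MvPolynomial (Fin N × Fin N) ℂ) :=
  Matrix.of fun i j =>
    if v i = j then 1 else if v i < j ∨ v.symm j < i then 0 else MvPolynomial.X (i, j)

/-- The `k`-th basic minor `Δ_v^{(k)}`: the determinant of the northwest-justified
`k × k` submatrix of `Z_v`. -/
noncomputable def basicMinor (N k : ℕ) (hk : k ≤ N) (v : Equiv.Perm (Fin N)) :
    MvPolynomial (Fin N × Fin N) ℂ :=
  (Matrix.of fun i j : Fin k => Zv N v (Fin.castLE hk i) (Fin.castLE hk j)).det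

/-- The one-coordinate index-deletion map underlying `φ_{i,j}`: delete the index `i`
from `[n+1]`, renumbering the indices above `i` down by one. -/
def delIdx {N : ℕ} (i a : Fin (N + 1)) (h : a ≠ i) : Fin N :=
  if hlt : a.1 < i.1 then ⟨a.1, by have := i.isLt; omega⟩
  else ⟨a.1 - 1, by
    have h1 := a.isLt
    have h2 : a.1 ≠ i.1 := fun hh => h (Fin.ext hh)
    omega⟩

/-- Row insertion `T ← x` for a tableau given as its list of rows (top to bottom). -/
def rowInsert : List (List ℕ) → ℕ → List (List ℕ)
  | [], x => [[x]]
  | row :: rest, x =>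
    match row.findIdx? (fun y => decide (x < y)) with
    | none => (row ++ [x]) :: rest
    | some k => (row.set k x) :: rowInsert rest (row.getD k 0)

/-- The insertion tableau `tab(w)` of a word `w`. -/
def tab (w : List ℕ) : List (List ℕ) := w.foldl rowInsert []

/-- The `RSK` correspondence: `RSK(M) = (tab(row(M)), tab(col(M)))`. -/
def RSKmap (M : Matrix (Fin m) (Fin n) ℕ) : List (List ℕ) × List (List ℕ) :=
  (tab (rowWord M), tab (colWord M))

/-- The column reading word of a tableau, with each letter labelled by its box `(row, col)`:
entries are read along columns bottom-to-top, left-to-right. -/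
def tabWordLbl (T : List (List ℕ)) : List (ℕ × (ℕ × ℕ)) :=
  (List.range (T.getD 0 []).length).flatMap fun j =>
    ((List.range T.length).reverse).filterMap fun r =>
      ((T.getD r [])[j]?).map fun x => (x, (r, j))

/-- The column reading word `word(T)` (columns bottom-to-top, left-to-right). -/
def tabWord (T : List (List ℕ)) : List ℕ := (tabWordLbl T).map Prod.fst

/-- Replace the entry of `T` in box `(r, j)` by `v`. -/
def setBox (T : List (List ℕ)) (r j v : ℕ) : List (List ℕ) :=
  T.set r ((T.getD r []).set j v)

/-- The tableau crystal lowering operator `f_i`: change the `i` of `T` corresponding to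
the rightmost unmatched `)` of `bracket_i(word(T))` into an `i + 1` (or `∅`). -/
def fTab (i : ℕ) (T : List (List ℕ)) : Option (List (List ℕ)) :=
  (lastUnmatched i (i + 1) (tabWordLbl T) 0).map fun p => setBox T p.1 p.2 (i + 1)

/-- The tableau crystal raising operator `e_i`: change the `i + 1` of `T` corresponding to
the leftmost unmatched `(` of `bracket_i(word(T))` into an `i` (or `∅`). -/
def eTab (i : ℕ) (T : List (List ℕ)) : Option (List (List ℕ)) :=
  (lastUnmatched (i + 1) i (tabWordLbl T).reverse 0).map fun p => setBox T p.1 p.2 i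

/-- `T` (a list of rows, top to bottom) is a semistandard Young tableau with positive
integer entries. -/
def IsSSYT (T : List (List ℕ)) : Prop :=
  (∀ r ∈ T, r ≠ []) ∧
  (∀ r ∈ T, List.Chain' (· ≤ ·) r) ∧
  (∀ i, (T.getD (i + 1) []).length ≤ (T.getD i []).length) ∧
  (∀ i j, j < (T.getD (i + 1) []).length →
    (T.getD i []).getD j 0 < (T.getD (i + 1) []).getD j 0) ∧
  (∀ r ∈ T, ∀ x ∈ r, 1 ≤ x)

/-- `w` is `[a,b]`-ballot: every initial segment contains at least as many `i`s as
`(i+1)`s, for each `i ∈ [a, b-1]`. -/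
def IsBallot (a b : ℕ) (w : List ℕ) : Prop :=
  ∀ k i, a ≤ i → i + 1 ≤ b → (w.take k).count (i + 1) ≤ (w.take k).count i

/-- `T` is an `[a,b]`-Littlewood–Richardson tableau: `revword(T)|_{[a,b]}` is
`[a,b]`-ballot. -/
def IsLRInterval (a b : ℕ) (T : List (List ℕ)) : Prop :=
  IsBallot a b (((tabWord T).reverse).filter fun x => decide (a ≤ x ∧ x ≤ b))

/-- `T` is `𝐊`-LR for `𝐊 = {0 = k_0 < ⋯ < k_t = ℓ}`: `T` is `[k_{α-1}+1, k_α]`-LR for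
every pair of consecutive elements of `𝐊`. -/
def IsKLR (K : Finset ℕ) (T : List (List ℕ)) : Prop :=
  ∀ a b, a ∈ K → b ∈ K → a < b → (∀ x ∈ K, ¬(a < x ∧ x < b)) → IsLRInterval (a + 1) b T

/-- The `[a,b]`-width of a word: the maximum length of a strictly decreasing subsequence
of the restriction `u|_{[a,b]}`. -/
noncomputable def widthInterval (a b : ℕ) (u : List ℕ) : ℕ :=
  sSup {d | ∃ s : List ℕ, s.Sublist (u.filter fun x => decide (a ≤ x ∧ x ≤ b)) ∧
    List.Chain' (· > ·) s ∧ s.length = d}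

/-- The entry of `T` in box `p = (row, col)`. -/
def tabEntry (T : List (List ℕ)) (p : ℕ × ℕ) : ℕ := (T.getD p.1 []).getD p.2 0

/-- The `[a,b]`-width of a tableau: the maximum length of an `[a,b]`-antidiagonal, i.e. a
sequence of boxes of `T` from distinct rows with entries in `[a,b]`, each box weakly east
and strictly north of the previous one, whose entries strictly decrease read bottom to
top. -/
noncomputable def tabWidth (a b : ℕ) (T : List (List ℕ)) : ℕ :=
  sSup {d | ∃ L : List (ℕ × ℕ),
    (∀ p ∈ L, p.1 < T.length ∧ p.2 < (T.getD p.1 []).length ∧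
      a ≤ tabEntry T p ∧ tabEntry T p ≤ b) ∧
    List.Chain' (fun p q => q.1 < p.1 ∧ p.2 ≤ q.2 ∧ tabEntry T q < tabEntry T p) L ∧
    L.length = d}

/-- The maximum length of a sequence of nonzero entries of `M` in antidiagonal position
(row indices strictly decreasing, column indices strictly increasing along the sequence)
with all (1-based) row indices in `[a,b]`. -/
noncomputable def rowAntidiagWidth (a b : ℕ) (M : Matrix (Fin m) (Fin n) ℕ) : ℕ :=
  sSup {d | ∃ L : List (Fin m × Fin n),
    (∀ p ∈ L, M p.1 p.2 ≠ 0 ∧ a ≤ p.1.1 + 1 ∧ p.1.1 + 1 ≤ b) ∧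
    List.Chain' (fun p q => q.1 < p.1 ∧ p.2 < q.2) L ∧
    L.length = d}

/-- As `rowAntidiagWidth`, but with all (1-based) column indices in `[a,b]`. -/
noncomputable def colAntidiagWidth (a b : ℕ) (M : Matrix (Fin m) (Fin n) ℕ) : ℕ :=
  sSup {d | ∃ L : List (Fin m × Fin n),
    (∀ p ∈ L, M p.1 p.2 ≠ 0 ∧ a ≤ p.2.1 + 1 ∧ p.2.1 + 1 ≤ b) ∧
    List.Chain' (fun p q => q.1 < p.1 ∧ p.2 < q.2) L ∧
    L.length = d}

/-- An elementary Knuth transformation: `prq ≡ rpq` for `p ≤ q < r`, and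
`qpr ≡ qrp` for `p < q ≤ r`. -/
inductive KnuthStep : List ℕ → List ℕ → Prop
  | swap1 (u v : List ℕ) (p q r : ℕ) (h1 : p ≤ q) (h2 : q < r) :
      KnuthStep (u ++ p :: r :: q :: v) (u ++ r :: p :: q :: v)
  | swap2 (u v : List ℕ) (p q r : ℕ) (h1 : p < q) (h2 : q ≤ r) :
      KnuthStep (u ++ q :: p :: r :: v) (u ++ q :: r :: p :: v)

/-- Knuth equivalence of words. -/
def KnuthEquiv : List ℕ → List ℕ → Prop := Relation.EqvGen KnuthStep

end GCS

/-!
**Gröbner basis.** Suppose `f` lies in the ideal, but no antidiagonal term of a generator divides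
its leading monomial `z^u`. Realize the term order by a valuation on a field of Hahn series. That
the order is antidiagonal becomes a strict Monge inequality for the sizes of the variables. One
then constructs a matrix `Z` over this field whose entries are at most as large as the variables,
with equality on the support of `u`, and such that the rank of every justified block is the length
of some antidiagonal chain in the part of the support inside the block. All generators vanish at
`Z`, while the term `z^u` dominates every other term of `f` there, so `f(Z) ≠ 0`, a contradiction.
The matrix is filled from the bottom row up and from left to right. A new cell outside the support
receives either a full-size pivot, compensated by a rank-one correction of the entries southwest
of it, or the value that leaves the ranks of the blocks unchanged, whose size the Monge inequality
controls.

**Bicrystals.** A crystal operator moves one unit between adjacent rows. By the bracketing rule,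
an antidiagonal chain of the new exponent matrix can be replaced by one of the old matrix, either
by shifting a column inside the window or by replacing a row index by the adjacent one. In the
latter case the new minor still lies in the ideal, because a transvection in the Levi subgroup
produces it.
-/

namespace GCS

section SetEntry

variable {ι κ R : Type*} [DecidableEq ι] [DecidableEq κ]

/-- The matrix `Z` with its `(i, j)` entry replaced by `z`. -/
def setEntry (Z : Matrix ι κ R) (i : ι) (j : κ) (z : R) : Matrix ι κ R :=
  Matrix.of fun r s => if r = i ∧ s = j then z else Z r s

@[simp]
theorem setEntry_self (Z : Matrix ι κ R) (i : ι) (j : κ) (z : R) : setEntry Z i j z i j = z := by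
  simp [setEntry]

theorem setEntry_of_ne (Z : Matrix ι κ R) {i r : ι} {j s : κ} (z : R) (h : ¬(r = i ∧ s = j)) :
    setEntry Z i j z r s = Z r s := by
  simp [setEntry, h]

end SetEntry

section SubmatrixRank

open Finset

variable {ι κ K : Type*} [Field K]

/-- The rank of the submatrix of `Z` with rows `A` and columns `B`. -/
noncomputable def subRank (Z : Matrix ι κ K) (A : Finset ι) (B : Finset κ) : ℕ :=
  (Z.submatrix (Subtype.val : A → ι) (Subtype.val : B → κ)).rank

theorem subRank_congr {Z Z' : Matrix ι κ K} {A : Finset ι} {B : Finset κ}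
    (h : ∀ r ∈ A, ∀ s ∈ B, Z r s = Z' r s) : subRank Z A B = subRank Z' A B :=
  congrArg Matrix.rank (Matrix.ext fun r s => h r r.2 s s.2)

theorem subRank_mono (Z : Matrix ι κ K) {A A' : Finset ι} {B B' : Finset κ} (hA : A ⊆ A')
    (hB : B ⊆ B') : subRank Z A B ≤ subRank Z A' B' :=
  Matrix.rank_submatrix_le (Z.submatrix (Subtype.val : A' → ι) (Subtype.val : B' → κ))
    (Set.inclusion hA) (Set.inclusion hB)

theorem subRank_transpose (Z : Matrix ι κ K) (A : Finset ι) (B : Finset κ) :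
    subRank Z.transpose B A = subRank Z A B :=
  Matrix.rank_transpose (Z.submatrix (Subtype.val : A → ι) (Subtype.val : B → κ))

@[simp]
theorem subRank_empty_left (Z : Matrix ι κ K) (B : Finset κ) : subRank Z ∅ B = 0 :=
  Nat.le_zero.1 ((Matrix.rank_le_card_height _).trans (by simp))

@[simp]
theorem subRank_empty_right (Z : Matrix ι κ K) (A : Finset ι) : subRank Z A ∅ = 0 :=
  Nat.le_zero.1 ((Matrix.rank_le_card_width _).trans (by simp))

theorem subRank_add_row_le (Z : Matrix ι κ K) {A : Finset ι} (B : Finset κ) {i : ι} (hi : i ∈ A)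
    (t : ι → K) : subRank (Matrix.of fun r s => Z r s + t r * Z i s) A B ≤ subRank Z A B := by
  classical
  have factor : (Matrix.of fun r s => Z r s + t r * Z i s).submatrix
      (Subtype.val : A → ι) (Subtype.val : B → κ) =
      (1 + Matrix.of fun r s : A => if s = ⟨i, hi⟩ then t r else 0) *
        Z.submatrix (Subtype.val : A → ι) (Subtype.val : B → κ) := by
    ext r s
    rw [Matrix.add_mul, Matrix.one_mul]
    simp [Matrix.mul_apply]
  rw [subRank, factor]
  exact Matrix.rank_mul_le_right _ _

theorem subRank_add_col_le (Z : Matrix ι κ K) (A : Finset ι) {B : Finset κ} {j : κ} (hj : j ∈ B)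
    (t : κ → K) : subRank (Matrix.of fun r s => Z r s + t s * Z r j) A B ≤ subRank Z A B := by
  rw [← subRank_transpose, ← subRank_transpose Z]
  exact subRank_add_row_le Z.transpose A hj t

/-- The span of the columns `B` of `Z`, restricted to the rows `A`. -/
def colSpan (Z : Matrix ι κ K) (A : Finset ι) (B : Set κ) : Submodule K (A → K) :=
  Submodule.span K ((fun s (r : A) => Z r s) '' B)

theorem subRank_eq_finrank_colSpan (Z : Matrix ι κ K) (A : Finset ι) (B : Finset κ) :
    subRank Z A B = Module.finrank K (colSpan Z A B) := by
  rw [subRank, Matrix.rank_eq_finrank_span_cols, colSpan, Set.image_eq_range]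
  rfl

theorem mem_colSpan_iff (Z : Matrix ι κ K) (A : Finset ι) (B : Finset κ) (j : κ) :
    (fun r : A => Z r j) ∈ colSpan Z A B ↔ ∃ α : κ → K, ∀ r ∈ A, Z r j = ∑ s ∈ B, α s * Z r s := by
  simp [colSpan, Submodule.mem_span_image_finset_iff_exists_fun', funext_iff, eq_comm]

theorem subRank_insert_col_le_iff [DecidableEq κ] {Z : Matrix ι κ K} {A : Finset ι}
    {B : Finset κ} {j : κ} :
    subRank Z A (insert j B) ≤ subRank Z A B ↔
      ∃ α : κ → K, ∀ r ∈ A, Z r j = ∑ s ∈ B, α s * Z r s := by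
  have insert_eq : colSpan Z A (insert j B : Finset κ) =
      Submodule.span K {fun r : A => Z r j} ⊔ colSpan Z A B := by
    rw [colSpan, coe_insert, Set.image_insert_eq, Submodule.span_insert]
    rfl
  rw [← mem_colSpan_iff, subRank_eq_finrank_colSpan, subRank_eq_finrank_colSpan, insert_eq]
  constructor
  · intro h
    rw [Submodule.eq_of_le_of_finrank_le le_sup_right h]
    exact Submodule.mem_sup_left (Submodule.mem_span_singleton_self _)
  · intro h
    rw [sup_eq_right.2 ((Submodule.span_singleton_le_iff_mem _ _).2 h)]

theorem subRank_insert_col_le_of_subset [DecidableEq κ] {Z : Matrix ι κ K} {A A' : Finset ι}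
    {B B' : Finset κ} {j : κ} (hA : A' ⊆ A) (hB : B ⊆ B')
    (h : subRank Z A (insert j B) ≤ subRank Z A B) :
    subRank Z A' (insert j B') ≤ subRank Z A' B' := by
  obtain ⟨α, hα⟩ := subRank_insert_col_le_iff.1 h
  refine subRank_insert_col_le_iff.2 ⟨fun s => if s ∈ B then α s else 0, fun r hr => ?_⟩
  simp [hα r (hA hr), ite_mul, sum_ite_mem, inter_eq_right.2 hB]

theorem subRank_insert_row_le_iff [DecidableEq ι] {Z : Matrix ι κ K} {A : Finset ι}
    {B : Finset κ} {i : ι} :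
    subRank Z (insert i A) B ≤ subRank Z A B ↔
      ∃ β : ι → K, ∀ s ∈ B, Z i s = ∑ r ∈ A, β r * Z r s := by
  rw [← subRank_transpose, ← subRank_transpose Z A]
  exact subRank_insert_col_le_iff

theorem subRank_insert_row_le_of_subset [DecidableEq ι] {Z : Matrix ι κ K} {A A' : Finset ι}
    {B B' : Finset κ} {i : ι} (hA : A ⊆ A') (hB : B' ⊆ B)
    (h : subRank Z (insert i A) B ≤ subRank Z A B) :
    subRank Z (insert i A') B' ≤ subRank Z A' B' := by
  rw [← subRank_transpose, ← subRank_transpose Z] at h ⊢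
  exact subRank_insert_col_le_of_subset hB hA h

/-- The Schur complement of the entry `Z i j`, as a matrix on all rows and columns. It is
meaningful only if `Z i j ≠ 0`. -/
def schurCompl (Z : Matrix ι κ K) (i : ι) (j : κ) : Matrix ι κ K :=
  Matrix.of fun r s => Z r s - Z r j * Z i s / Z i j

variable [DecidableEq ι]

/-- The elimination map `x ↦ x - (x i / Z i j) • (column j)` from vectors on the rows
`insert i A` to vectors on the rows `A`. -/
def eliminate (Z : Matrix ι κ K) (A : Finset ι) (i : ι) (j : κ) :
    (↥(insert i A) → K) →ₗ[K] (A → K) where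
  toFun x r := x ⟨r, mem_insert_of_mem r.2⟩ - Z r j / Z i j * x ⟨i, mem_insert_self i A⟩
  map_add' x y := by ext r; simp only [Pi.add_apply]; ring
  map_smul' c x := by ext r; simp only [Pi.smul_apply, smul_eq_mul, RingHom.id_apply]; ring

theorem ker_eliminate {Z : Matrix ι κ K} (A : Finset ι) {i : ι} {j : κ} (hij : Z i j ≠ 0) :
    LinearMap.ker (eliminate Z A i j) =
      Submodule.span K {fun r : ↥(insert i A) => Z r j} := by
  ext x
  rw [LinearMap.mem_ker, Submodule.mem_span_singleton]
  constructor
  · intro hx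
    refine ⟨x ⟨i, mem_insert_self i A⟩ / Z i j, funext fun ⟨r, hr⟩ => ?_⟩
    rcases mem_insert.1 hr with rfl | hrA
    · exact div_mul_cancel₀ _ hij
    · have hxr : x ⟨r, hr⟩ - Z r j / Z i j * x ⟨i, mem_insert_self i A⟩ = 0 :=
        congrFun hx ⟨r, hrA⟩
      rw [sub_eq_zero.1 hxr, Pi.smul_apply, smul_eq_mul]
      ring
  · rintro ⟨c, rfl⟩
    ext r
    simp only [eliminate, LinearMap.coe_mk, AddHom.coe_mk, Pi.smul_apply, smul_eq_mul,
      Pi.zero_apply]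
    field_simp
    ring

theorem map_eliminate_colSpan {Z : Matrix ι κ K} (A : Finset ι) (B : Set κ) {i : ι} {j : κ}
    (hij : Z i j ≠ 0) :
    (colSpan Z (insert i A) (insert j B)).map (eliminate Z A i j) =
      colSpan (schurCompl Z i j) A B := by
  have eliminate_pivot : eliminate Z A i j (fun r => Z r j) = 0 :=
    LinearMap.mem_ker.1 (ker_eliminate A hij ▸ Submodule.mem_span_singleton_self _)
  rw [colSpan, Submodule.map_span, Set.image_insert_eq, Set.image_insert_eq, eliminate_pivot,
    Submodule.span_insert_zero, Set.image_image, colSpan]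
  congr 1
  refine Set.image_congr fun s _ => funext fun r => ?_
  simp only [eliminate, schurCompl, LinearMap.coe_mk, AddHom.coe_mk, Matrix.of_apply]
  ring

variable [DecidableEq κ]

theorem subRank_insert_insert {Z : Matrix ι κ K} (A : Finset ι) (B : Finset κ) {i : ι} {j : κ}
    (hij : Z i j ≠ 0) :
    subRank Z (insert i A) (insert j B) = subRank (schurCompl Z i j) A B + 1 := by
  set W := colSpan Z (insert i A) (insert j B : Finset κ) with hW
  have pivot_mem : (fun r : ↥(insert i A) => Z r j) ∈ W :=
    Submodule.subset_span ⟨j, by simp, rfl⟩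
  have pivot_ne : (fun r : ↥(insert i A) => Z r j) ≠ 0 :=
    fun h => hij (congrFun h ⟨i, mem_insert_self i A⟩)
  have ker_eq : Module.finrank K (LinearMap.ker ((eliminate Z A i j).domRestrict W)) = 1 := by
    rw [LinearMap.ker_domRestrict, ker_eliminate A hij]
    rw [(Submodule.comapSubtypeEquivOfLe
      ((Submodule.span_singleton_le_iff_mem _ _).2 pivot_mem)).finrank_eq]
    exact finrank_span_singleton pivot_ne
  rw [subRank_eq_finrank_colSpan, subRank_eq_finrank_colSpan, ← hW,
    ← LinearMap.finrank_range_add_finrank_ker ((eliminate Z A i j).domRestrict W), ker_eq,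
    LinearMap.range_domRestrict, hW, coe_insert, map_eliminate_colSpan A B hij]

theorem subRank_setEntry (Z : Matrix ι κ K) {A : Finset ι} {B : Finset κ} {i : ι} {j : κ} (z : K)
    (h : i ∉ A ∨ j ∉ B) : subRank (setEntry Z i j z) A B = subRank Z A B :=
  subRank_congr fun r hr s hs => setEntry_of_ne Z z (by rintro ⟨rfl, rfl⟩; tauto)

theorem exists_setEntry_subRank_insert_le {Z : Matrix ι κ K} {A : Finset ι} {B : Finset κ}
    {i : ι} {j : κ} (hi : i ∉ A) (hj : j ∉ B)
    (hcol : subRank Z A (insert j B) ≤ subRank Z A B)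
    (hrow : subRank Z (insert i A) B ≤ subRank Z A B) :
    ∃ z, subRank (setEntry Z i j z) (insert i A) (insert j B) ≤
        subRank (setEntry Z i j z) (insert i A) B ∧
      subRank (setEntry Z i j z) (insert i A) (insert j B) ≤
        subRank (setEntry Z i j z) A (insert j B) := by
  obtain ⟨α, hα⟩ := subRank_insert_col_le_iff.1 hcol
  obtain ⟨β, hβ⟩ := subRank_insert_row_le_iff.1 hrow
  have consistent : ∑ s ∈ B, α s * Z i s = ∑ r ∈ A, β r * Z r j := by
    calc ∑ s ∈ B, α s * Z i s = ∑ s ∈ B, ∑ r ∈ A, α s * (β r * Z r s) :=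
          sum_congr rfl fun s hs => by rw [hβ s hs, mul_sum]
      _ = ∑ r ∈ A, β r * ∑ s ∈ B, α s * Z r s := by
          simp only [sum_comm (s := B), mul_sum, mul_left_comm]
      _ = ∑ r ∈ A, β r * Z r j := sum_congr rfl fun r hr => by rw [hα r hr]
  have ne_col : ∀ r, ∀ s ∈ B, ¬(r = i ∧ s = j) := by rintro _ s hs ⟨-, rfl⟩; exact hj hs
  have ne_row : ∀ r ∈ A, ∀ s, ¬(r = i ∧ s = j) := by rintro r hr _ ⟨rfl, -⟩; exact hi hr
  refine ⟨∑ s ∈ B, α s * Z i s, subRank_insert_col_le_iff.2 ⟨α, fun r hr => ?_⟩,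
    subRank_insert_row_le_iff.2 ⟨β, fun s hs => ?_⟩⟩
  · have row_sum : ∑ s ∈ B, α s * setEntry Z i j (∑ s ∈ B, α s * Z i s) r s =
        ∑ s ∈ B, α s * Z r s :=
      sum_congr rfl fun s hs => by rw [setEntry_of_ne Z _ (ne_col r s hs)]
    rcases mem_insert.1 hr with rfl | hr
    · rw [setEntry_self, row_sum]
    · rw [setEntry_of_ne Z _ (ne_row r hr j), row_sum, hα r hr]
  · have col_sum : ∑ r ∈ A, β r * setEntry Z i j (∑ s ∈ B, α s * Z i s) r s =
        ∑ r ∈ A, β r * Z r s :=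
      sum_congr rfl fun r hr => by rw [setEntry_of_ne Z _ (ne_row r hr s)]
    rcases mem_insert.1 hs with rfl | hs
    · rw [setEntry_self, col_sum, consistent]
    · rw [setEntry_of_ne Z _ (ne_col i s hs), col_sum, hβ s hs]

end SubmatrixRank

section AntidiagonalChains

variable {ι κ : Type*} [LinearOrder ι] [LinearOrder κ] {P : ι → κ → Prop}

/-- The cells of `A × B` satisfying `P` contain an antidiagonal chain of length `k`: rows increase
while columns decrease. -/
def HasAntidiagChain (P : ι → κ → Prop) (k : ℕ) (A : Finset ι) (B : Finset κ) : Prop :=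
  ∃ (r : Fin k → ι) (s : Fin k → κ), StrictMono r ∧ StrictAnti s ∧
    ∀ t, r t ∈ A ∧ s t ∈ B ∧ P (r t) (s t)

namespace HasAntidiagChain

theorem zero (A : Finset ι) (B : Finset κ) : HasAntidiagChain P 0 A B :=
  ⟨finZeroElim, finZeroElim, finZeroElim, finZeroElim, finZeroElim⟩

theorem mono {k l : ℕ} {A A' : Finset ι} {B B' : Finset κ} (hlk : l ≤ k) (hA : A ⊆ A')
    (hB : B ⊆ B') : HasAntidiagChain P k A B → HasAntidiagChain P l A' B'
  | ⟨r, s, hr, hs, hrs⟩ =>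
    ⟨r ∘ Fin.castLE hlk, s ∘ Fin.castLE hlk, hr.comp (Fin.strictMono_castLE hlk),
      hs.comp_strictMono (Fin.strictMono_castLE hlk),
      fun _ => ⟨hA (hrs _).1, hB (hrs _).2.1, (hrs _).2.2⟩⟩

theorem cons {k : ℕ} {A : Finset ι} {B : Finset κ} {i : ι} {j : κ} (hP : P i j)
    (hA : ∀ r ∈ A, i < r) (hB : ∀ s ∈ B, s < j) :
    HasAntidiagChain P k A B → HasAntidiagChain P (k + 1) (insert i A) (insert j B)
  | ⟨r, s, hr, hs, hrs⟩ => by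
    refine ⟨Fin.cons i r, Fin.cons j s, ?_, ?_, ?_⟩
    · simpa [StrictMono, Fin.forall_fin_succ] using ⟨fun t => hA _ (hrs t).1, hr⟩
    · simpa [StrictAnti, Fin.forall_fin_succ] using ⟨fun t => hB _ (hrs t).2.1, hs⟩
    · simpa [Fin.forall_fin_succ, hP] using fun t => ⟨.inr (hrs t).1, .inr (hrs t).2.1, (hrs t).2.2⟩

theorem exists_filter {k : ℕ} {A : Finset ι} {B : Finset κ} :
    HasAntidiagChain P (k + 1) A B → ∃ i ∈ A, ∃ j ∈ B, P i j ∧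
      HasAntidiagChain P k (A.filter (i < ·)) (B.filter (· < j))
  | ⟨r, s, hr, hs, hrs⟩ =>
    ⟨r 0, (hrs 0).1, s 0, (hrs 0).2.1, (hrs 0).2.2, r ∘ Fin.succ, s ∘ Fin.succ,
      hr.comp Fin.strictMono_succ, hs.comp_strictMono Fin.strictMono_succ, fun t =>
        ⟨Finset.mem_filter.2 ⟨(hrs _).1, hr t.succ_pos⟩,
          Finset.mem_filter.2 ⟨(hrs _).2.1, hs t.succ_pos⟩, (hrs _).2.2⟩⟩

end HasAntidiagChain

end AntidiagonalChains

section Valuations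

open Finset

variable {ι κ K Γ₀ : Type*} [Field K] [LinearOrderedCommGroupWithZero Γ₀] {v : Valuation K Γ₀}
  {g Z Z' : Matrix ι κ K} {P : ι → κ → Prop} {A : Finset ι} {B : Finset κ}

/-- The `(r, s)` entry of `Z` is at most as large as that of `g`, and of the same size if the cell
`(r, s)` belongs to `P`. -/
def LeadsAt (v : Valuation K Γ₀) (g : Matrix ι κ K) (P : ι → κ → Prop) (Z : Matrix ι κ K) (r : ι)
    (s : κ) : Prop :=
  v (Z r s) ≤ v (g r s) ∧ (P r s → v (Z r s) = v (g r s))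

theorem LeadsAt.of_map_sub_lt {r : ι} {s : κ} (h : LeadsAt v g P Z r s)
    (hlt : v (Z' r s - Z r s) < v (g r s)) : LeadsAt v g P Z' r s := by
  rw [LeadsAt, ← sub_add_cancel (Z' r s) (Z r s)]
  refine ⟨(v.map_add _ _).trans (max_le hlt.le h.1), fun hP => ?_⟩
  rw [← h.2 hP] at hlt ⊢
  exact v.map_add_eq_of_lt_right hlt

variable [LinearOrder ι] [LinearOrder κ]

/-- The valuations of the entries of `g` satisfy a strict Monge inequality on `A × B`: in each
`2 × 2` submatrix the antidiagonal product dominates the diagonal one. -/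
structure IsMongeOn (v : Valuation K Γ₀) (g : Matrix ι κ K) (A : Finset ι) (B : Finset κ) :
    Prop where
  ne_zero : ∀ r ∈ A, ∀ s ∈ B, g r s ≠ 0
  mul_lt_mul : ∀ i ∈ A, ∀ r ∈ A, i < r → ∀ c ∈ B, ∀ j ∈ B, c < j →
    v (g r j) * v (g i c) < v (g i j) * v (g r c)

theorem IsMongeOn.mono {A' : Finset ι} {B' : Finset κ} (hg : IsMongeOn v g A B) (hA : A' ⊆ A)
    (hB : B' ⊆ B) : IsMongeOn v g A' B' where
  ne_zero r hr s hs := hg.ne_zero r (hA hr) s (hB hs)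
  mul_lt_mul i hi r hr hir c hc j hj hcj :=
    hg.mul_lt_mul i (hA hi) r (hA hr) hir c (hB hc) j (hB hj) hcj

theorem IsMongeOn.map_mul_div_lt (hg : IsMongeOn v g A B) {i r : ι} {c j : κ} (hi : i ∈ A)
    (hr : r ∈ A) (hir : i < r) (hc : c ∈ B) (hj : j ∈ B) (hcj : c < j) {x y z : K}
    (hx : v x ≤ v (g r j)) (hy : v y ≤ v (g i c)) (hz : v (g i j) ≤ v z) :
    v (x * y / z) < v (g r c) := by
  have hz0 : 0 < v z := ((Valuation.pos_iff v).2 (hg.ne_zero i hi j hj)).trans_le hz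
  rw [map_div₀, map_mul, div_lt_iff₀ hz0]
  calc v x * v y ≤ v (g r j) * v (g i c) := mul_le_mul' hx hy
    _ < v (g i j) * v (g r c) := hg.mul_lt_mul i hi r hr hir c hc j hj hcj
    _ ≤ v (g r c) * v z := by rw [mul_comm]; gcongr

theorem LeadsAt.schur (hg : IsMongeOn v g A B) {i r : ι} {c j : κ} (hi : i ∈ A) (hr : r ∈ A)
    (hir : i < r) (hc : c ∈ B) (hj : j ∈ B) (hcj : c < j) (hrj : v (Z r j) ≤ v (g r j))
    (hic : v (Z i c) ≤ v (g i c)) (hij : v (g i j) ≤ v (Z i j)) (h : LeadsAt v g P Z r c) :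
    LeadsAt v g P (schurCompl Z i j) r c :=
  h.of_map_sub_lt <| by
    rw [schurCompl, Matrix.of_apply, sub_sub_cancel_left, Valuation.map_neg]
    exact hg.map_mul_div_lt hi hr hir hc hj hcj hrj hic hij

theorem HasAntidiagChain.le_subRank {k : ℕ} (h : HasAntidiagChain P k A B)
    (hg : IsMongeOn v g A B) (hZ : ∀ r ∈ A, ∀ s ∈ B, LeadsAt v g P Z r s) :
    k ≤ subRank Z A B := by
  induction k generalizing Z A B with
  | zero => exact Nat.zero_le _
  | succ k ih =>
    obtain ⟨i, hi, j, hj, hP, hchain⟩ := h.exists_filter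
    have hij : v (Z i j) = v (g i j) := (hZ i hi j hj).2 hP
    have hij0 : Z i j ≠ 0 := by
      rw [← Valuation.ne_zero_iff v, hij, Valuation.ne_zero_iff]
      exact hg.ne_zero i hi j hj
    have hrec := ih hchain (hg.mono (filter_subset _ _) (filter_subset _ _))
      (Z := schurCompl Z i j) fun r hr s hs => by
        rw [mem_filter] at hr hs
        exact (hZ r hr.1 s hs.1).schur hg hi hr.1 hr.2 hs.1 hj hs.2 (hZ r hr.1 j hj).1
          (hZ i hi s hs.1).1 hij.ge
    calc k + 1 ≤ subRank (schurCompl Z i j) _ _ + 1 := Nat.succ_le_succ hrec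
      _ = subRank Z (insert i (A.filter (i < ·))) (insert j (B.filter (· < j))) :=
        (subRank_insert_insert _ _ hij0).symm
      _ ≤ subRank Z A B := subRank_mono Z (insert_subset hi (filter_subset _ _))
        (insert_subset hj (filter_subset _ _))

theorem map_apply_le_of_subRank_insert_insert_le {i : ι} {j : κ}
    (hg : IsMongeOn v g (insert i A) (insert j B)) (hA : ∀ r ∈ A, i < r) (hB : ∀ s ∈ B, s < j)
    (hZ : ∀ r ∈ insert i A, ∀ s ∈ insert j B, ¬(r = i ∧ s = j) → LeadsAt v g P Z r s)
    (hchain : HasAntidiagChain P (subRank Z A B) A B)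
    (hrank : subRank Z (insert i A) (insert j B) ≤ subRank Z A B) :
    v (Z i j) ≤ v (g i j) := by
  by_contra! hlt
  have hi := mem_insert_self i A
  have hj := mem_insert_self j B
  have hij : Z i j ≠ 0 := (Valuation.pos_iff v).1 (zero_le.trans_lt hlt)
  have hschur : subRank Z A B ≤ subRank (schurCompl Z i j) A B := by
    refine hchain.le_subRank (hg.mono (subset_insert i A) (subset_insert j B)) fun r hr s hs => ?_
    have hr' := mem_insert_of_mem (b := i) hr
    have hs' := mem_insert_of_mem (b := j) hs
    exact (hZ r hr' s hs' fun h => (hA r hr).ne' h.1).schur hg hi hr' (hA r hr) hs' hj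
      (hB s hs) (hZ r hr' j hj fun h => (hA r hr).ne' h.1).1
      (hZ i hi s hs' fun h => (hB s hs).ne h.2).1 hlt.le
  rw [subRank_insert_insert A B hij] at hrank
  omega

/-- Fill the cell `(i, j)` of `Z` with the pivot `z`, correcting the entries southwest of it so
that they become the Schur complement of the new pivot. -/
noncomputable def pivotFill (Z : Matrix ι κ K) (i : ι) (j : κ) (z : K) : Matrix ι κ K :=
  setEntry (Matrix.of fun r s => if i < r ∧ s < j then Z r s + Z r j * Z i s / z else Z r s) i j z

theorem pivotFill_apply_of_not_lt {i r : ι} {j s : κ} (z : K) (hne : ¬(r = i ∧ s = j))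
    (hlt : ¬(i < r ∧ s < j)) : pivotFill Z i j z r s = Z r s := by
  simp [pivotFill, setEntry_of_ne _ z hne, hlt]

theorem pivotFill_apply_of_lt {i r : ι} {j s : κ} (z : K) (hr : i < r) (hs : s < j) :
    pivotFill Z i j z r s = Z r s + Z r j * Z i s / z := by
  simp [pivotFill, setEntry_of_ne _ z fun h => hr.ne' h.1, hr, hs]

@[simp]
theorem pivotFill_self (i : ι) (j : κ) (z : K) : pivotFill Z i j z i j = z :=
  setEntry_self _ i j z

theorem subRank_pivotFill_insert_insert {i : ι} {j : κ} {z : K} (hz : z ≠ 0)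
    (hA : ∀ r ∈ A, i < r) (hB : ∀ s ∈ B, s < j) :
    subRank (pivotFill Z i j z) (insert i A) (insert j B) = subRank Z A B + 1 := by
  rw [subRank_insert_insert A B (by rwa [pivotFill_self])]
  refine congrArg (· + 1) (subRank_congr fun r hr s hs => ?_)
  have hr := hA r hr
  have hs := hB s hs
  rw [schurCompl, Matrix.of_apply, pivotFill_apply_of_lt z hr hs, pivotFill_self,
    pivotFill_apply_of_not_lt z (fun h => hr.ne' h.1) (fun h => lt_irrefl j h.2),
    pivotFill_apply_of_not_lt z (fun h => hs.ne h.2) (fun h => lt_irrefl i h.1),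
    add_sub_cancel_right]

theorem subRank_pivotFill_le_of_mem_row {i : ι} {j : κ} (z : K) (hi : i ∈ A)
    (hB : ∀ s ∈ B, s < j) : subRank (pivotFill Z i j z) A B ≤ subRank Z A B := by
  refine (subRank_congr fun r _ s hs => ?_).trans_le
    (subRank_add_row_le Z B hi fun r => if i < r then Z r j / z else 0)
  by_cases hr : i < r
  · rw [pivotFill_apply_of_lt z hr (hB s hs), Matrix.of_apply, if_pos hr]
    ring
  · rw [pivotFill_apply_of_not_lt z (fun h => (hB s hs).ne h.2) (fun h => hr h.1),
      Matrix.of_apply, if_neg hr, zero_mul, add_zero]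

theorem subRank_pivotFill_le_of_mem_col {i : ι} {j : κ} (z : K) (hA : ∀ r ∈ A, i < r)
    (hj : j ∈ B) : subRank (pivotFill Z i j z) A B ≤ subRank Z A B := by
  refine (subRank_congr fun r hr s _ => ?_).trans_le
    (subRank_add_col_le Z A hj fun s => if s < j then Z i s / z else 0)
  by_cases hs : s < j
  · rw [pivotFill_apply_of_lt z (hA r hr) hs, Matrix.of_apply, if_pos hs]
    ring
  · rw [pivotFill_apply_of_not_lt z (fun h => (hA r hr).ne' h.1) (fun h => hs h.2),
      Matrix.of_apply, if_neg hs, zero_mul, add_zero]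

end Valuations

section Filling

open Finset

variable {K Γ₀ : Type*} [Field K] [LinearOrderedCommGroupWithZero Γ₀] {v : Valuation K Γ₀}
  {g Z Z' : Matrix ℕ ℕ K} {P : ℕ → ℕ → Prop} {m n i j : ℕ}

/-- The cells of an `m × n` matrix that precede `(i, j)` when the rows are read from bottom to top,
each from left to right. -/
def IsProcessed (m n i j r s : ℕ) : Prop :=
  r < m ∧ s < n ∧ (i < r ∨ r = i ∧ s < j)

/-- The block with rows `[a, a')` and columns `[b, c)` consists of cells preceding `(i, j)`, and it
touches both the northeast and the southwest boundary of the staircase formed by these cells.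
At the last stage `(0, n)` these are the blocks that touch the top or right edge of the matrix, and
the bottom or left edge. -/
def IsStageBlock (m n i j a a' b c : ℕ) : Prop :=
  a' ≤ m ∧ c ≤ n ∧ (i < a ∨ a = i ∧ c ≤ j) ∧ (c = n ∨ a ≤ i ∨ a = i + 1 ∧ j ≤ c) ∧
    (a' = m ∨ b = 0)

/-- A solution of the matrix completion problem on the cells preceding `(i, j)`: the entries have
the prescribed sizes, and the rank of each block is attained by an antidiagonal chain in `P`. -/
structure IsFilledTo (v : Valuation K Γ₀) (g : Matrix ℕ ℕ K) (P : ℕ → ℕ → Prop)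
    (m n i j : ℕ) (Z : Matrix ℕ ℕ K) : Prop where
  leadsAt : ∀ {r s}, IsProcessed m n i j r s → LeadsAt v g P Z r s
  hasChain : ∀ {a a' b c}, IsStageBlock m n i j a a' b c →
    HasAntidiagChain P (subRank Z (Ico a a') (Ico b c)) (Ico a a') (Ico b c)

theorem hasAntidiagChain_subRank_of_le {a a' b c : ℕ} (h : a' ≤ a ∨ c ≤ b) :
    HasAntidiagChain P (subRank Z (Ico a a') (Ico b c)) (Ico a a') (Ico b c) := by
  rcases h with h | h <;> simpa [Ico_eq_empty_of_le h] using HasAntidiagChain.zero _ _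

namespace IsFilledTo

theorem next_col (hZ : IsFilledTo v g P m n i j Z)
    (hcells : ∀ {r s}, IsProcessed m n i j r s → LeadsAt v g P Z r s → LeadsAt v g P Z' r s)
    (hcell : LeadsAt v g P Z' i j)
    (hold : ∀ {a a' b c}, a < a' → IsStageBlock m n i j a a' b c →
      IsStageBlock m n i (j + 1) a a' b c →
      subRank Z' (Ico a a') (Ico b c) ≤ subRank Z (Ico a a') (Ico b c))
    (hnew : ∀ {a' b}, i < a' → b ≤ j → a' ≤ m → a' = m ∨ b = 0 →
      HasAntidiagChain P (subRank Z' (Ico i a') (Ico b (j + 1))) (Ico i a') (Ico b (j + 1))) :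
    IsFilledTo v g P m n i (j + 1) Z' where
  leadsAt {r s} hrs := by
    by_cases hij : r = i ∧ s = j
    · obtain ⟨rfl, rfl⟩ := hij
      exact hcell
    · have hrs' : IsProcessed m n i j r s := by unfold IsProcessed at *; omega
      exact hcells hrs' (hZ.leadsAt hrs')
  hasChain {a a' b c} hblock := by
    by_cases hempty : a' ≤ a ∨ c ≤ b
    · exact hasAntidiagChain_subRank_of_le hempty
    push Not at hempty
    by_cases hac : a = i ∧ c = j + 1
    · obtain ⟨rfl, rfl⟩ := hac
      exact hnew hempty.1 (Nat.lt_succ_iff.1 hempty.2) hblock.1 hblock.2.2.2.2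
    · have hblock' : IsStageBlock m n i j a a' b c := by unfold IsStageBlock at *; omega
      exact (hZ.hasChain hblock').mono (hold hempty.1 hblock' hblock) subset_rfl subset_rfl

theorem next_row (hZ : IsFilledTo v g P m n (i + 1) n Z) : IsFilledTo v g P m n i 0 Z where
  leadsAt hrs := hZ.leadsAt (by unfold IsProcessed at *; omega)
  hasChain {a a' b c} hblock := by
    by_cases hempty : a' ≤ a ∨ c ≤ b
    · exact hasAntidiagChain_subRank_of_le hempty
    · exact hZ.hasChain (by unfold IsStageBlock at *; omega)

theorem hasChain_below_left (hZ : IsFilledTo v g P m n i j Z) (hj : j < n) {a' b : ℕ}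
    (ha : a' ≤ m) (hab : a' = m ∨ b = 0) :
    HasAntidiagChain P (subRank Z (Ico (i + 1) a') (Ico b j)) (Ico (i + 1) a') (Ico b j) :=
  hZ.hasChain (by unfold IsStageBlock; omega)

theorem hasChain_below (hZ : IsFilledTo v g P m n i j Z) (hj : j < n) {a' b : ℕ}
    (ha : a' ≤ m) (hab : a' = m ∨ b = 0) :
    HasAntidiagChain P (subRank Z (Ico (i + 1) a') (Ico b (j + 1))) (Ico i a')
      (Ico b (j + 1)) :=
  (hZ.hasChain (by unfold IsStageBlock; omega)).mono le_rfl
    (Ico_subset_Ico_left i.le_succ) subset_rfl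

theorem hasChain_left (hZ : IsFilledTo v g P m n i j Z) (hj : j < n) {a' b : ℕ} (ha : a' ≤ m)
    (hab : a' = m ∨ b = 0) :
    HasAntidiagChain P (subRank Z (Ico i a') (Ico b j)) (Ico i a') (Ico b (j + 1)) :=
  (hZ.hasChain (by unfold IsStageBlock; omega)).mono le_rfl subset_rfl
    (Ico_subset_Ico_right j.le_succ)

theorem leadsAt_pivotFill (hZ : IsFilledTo v g P m n i j Z)
    (hg : IsMongeOn v g (range m) (range n)) (hi : i < m) (hj : j < n) {r s : ℕ}
    (hrs : IsProcessed m n i j r s) (h : LeadsAt v g P Z r s) :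
    LeadsAt v g P (pivotFill Z i j (g i j)) r s := by
  refine h.of_map_sub_lt ?_
  by_cases hsw : i < r ∧ s < j
  · rw [pivotFill_apply_of_lt _ hsw.1 hsw.2, add_sub_cancel_left]
    exact hg.map_mul_div_lt (mem_range.2 hi) (mem_range.2 hrs.1) hsw.1 (mem_range.2 hrs.2.1)
      (mem_range.2 hj) hsw.2 (hZ.leadsAt ⟨hrs.1, hj, .inl hsw.1⟩).1
      (hZ.leadsAt ⟨hi, hrs.2.1, .inr ⟨rfl, hsw.2⟩⟩).1 le_rfl
  · rw [pivotFill_apply_of_not_lt _ (by unfold IsProcessed at hrs; omega) hsw, sub_self, map_zero]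
    exact (Valuation.pos_iff v).2 (hg.ne_zero r (mem_range.2 hrs.1) s (mem_range.2 hrs.2.1))

theorem subRank_pivotFill_le {a a' b c : ℕ} (z : K) (ha : a < a')
    (h : IsStageBlock m n i j a a' b c) (h' : IsStageBlock m n i (j + 1) a a' b c) (hj : j < n) :
    subRank (pivotFill Z i j z) (Ico a a') (Ico b c) ≤ subRank Z (Ico a a') (Ico b c) := by
  unfold IsStageBlock at h h'
  by_cases hai : a = i
  · exact subRank_pivotFill_le_of_mem_row z (mem_Ico.2 (by omega)) fun s hs => by
      rw [mem_Ico] at hs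
      omega
  by_cases hbj : b ≤ j
  · exact subRank_pivotFill_le_of_mem_col z (fun r hr => by rw [mem_Ico] at hr; omega)
      (mem_Ico.2 (by omega))
  · refine (subRank_congr fun r hr s hs => ?_).le
    rw [mem_Ico] at hr hs
    exact pivotFill_apply_of_not_lt z (by omega) (by omega)

theorem next_col_pivotFill (hZ : IsFilledTo v g P m n i j Z)
    (hg : IsMongeOn v g (range m) (range n)) (hi : i < m) (hj : j < n)
    (hnew : ∀ {a' b}, i < a' → b ≤ j → a' ≤ m → a' = m ∨ b = 0 →
      HasAntidiagChain P (subRank Z (Ico (i + 1) a') (Ico b j) + 1) (Ico i a')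
        (Ico b (j + 1))) :
    IsFilledTo v g P m n i (j + 1) (pivotFill Z i j (g i j)) :=
  hZ.next_col (fun hrs h => hZ.leadsAt_pivotFill hg hi hj hrs h)
    (by simp [LeadsAt])
    (fun ha h h' => subRank_pivotFill_le _ ha h h' hj)
    fun {a' b} ha hb ham hab => by
      have hrank := subRank_pivotFill_insert_insert (Z := Z) (A := Ico (i + 1) a') (B := Ico b j)
        (hg.ne_zero i (mem_range.2 hi) j (mem_range.2 hj))
        (fun r hr => (mem_Ico.1 hr).1) (fun s hs => (mem_Ico.1 hs).2)
      rw [insert_Ico_add_one_left_eq_Ico ha, insert_Ico_right_eq_Ico_add_one hb] at hrank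
      exact hrank ▸ hnew ha hb ham hab

theorem next_col_setEntry (hZ : IsFilledTo v g P m n i j Z) (hP : ¬P i j) {z : K}
    (hz : v z ≤ v (g i j))
    (hnew : ∀ {a' b}, i < a' → b ≤ j → a' ≤ m → a' = m ∨ b = 0 →
      HasAntidiagChain P (subRank (setEntry Z i j z) (Ico i a') (Ico b (j + 1))) (Ico i a')
        (Ico b (j + 1))) :
    IsFilledTo v g P m n i (j + 1) (setEntry Z i j z) := by
  refine hZ.next_col (fun hrs h => ?_) ?_ (fun _ h _ => ?_) hnew
  · rwa [LeadsAt, setEntry_of_ne Z z (by unfold IsProcessed at hrs; omega)]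
  · rw [LeadsAt, setEntry_self]
    exact ⟨hz, fun h => absurd h hP⟩
  · refine (subRank_setEntry Z z ?_).le
    unfold IsStageBlock at h
    simp only [mem_Ico]
    omega

theorem map_le_of_subRank_setEntry_le (hZ : IsFilledTo v g P m n i j Z)
    (hg : IsMongeOn v g (range m) (range n)) (hj : j < n) {a b : ℕ} (ha : i < a) (hb : b ≤ j)
    (ham : a ≤ m) (hab : a = m ∨ b = 0) {z : K}
    (hrank : subRank (setEntry Z i j z) (Ico i a) (Ico b (j + 1)) ≤
      subRank Z (Ico (i + 1) a) (Ico b j)) : v z ≤ v (g i j) := by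
  have hrows := insert_Ico_add_one_left_eq_Ico ha
  have hcols := insert_Ico_right_eq_Ico_add_one hb
  have hcorner : subRank (setEntry Z i j z) (Ico (i + 1) a) (Ico b j) =
      subRank Z (Ico (i + 1) a) (Ico b j) := subRank_setEntry Z z (.inl (by simp))
  have hle := map_apply_le_of_subRank_insert_insert_le (v := v) (g := g) (P := P)
    (Z := setEntry Z i j z) (i := i) (j := j) (A := Ico (i + 1) a) (B := Ico b j)
    (by
      rw [hrows, hcols]
      exact hg.mono (fun r hr => by simp only [mem_Ico, mem_range] at *; omega)
        (fun s hs => by simp only [mem_Ico, mem_range] at *; omega))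
    (fun r hr => (mem_Ico.1 hr).1) (fun s hs => (mem_Ico.1 hs).2)
    (fun r hr s hs hne => by
      rw [hrows, mem_Ico] at hr
      rw [hcols, mem_Ico] at hs
      rw [LeadsAt, setEntry_of_ne Z z hne]
      exact hZ.leadsAt (by unfold IsProcessed; omega))
    (by rw [hcorner]; exact hZ.hasChain_below_left hj ham hab)
    (by rw [hrows, hcols, hcorner]; exact hrank)
  rwa [setEntry_self] at hle

theorem exists_next_col_of_subRank_le (hZ : IsFilledTo v g P m n i j Z)
    (hg : IsMongeOn v g (range m) (range n)) (hj : j < n) (hP : ¬P i j) {a b : ℕ}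
    (ha : i < a) (hb : b ≤ j) (ham : a ≤ m) (hab : a = m ∨ b = 0)
    (hcol : subRank Z (Ico (i + 1) a) (Ico b (j + 1)) ≤ subRank Z (Ico (i + 1) a) (Ico b j))
    (hrow : subRank Z (Ico i a) (Ico b j) ≤ subRank Z (Ico (i + 1) a) (Ico b j)) :
    ∃ Z', IsFilledTo v g P m n i (j + 1) Z' := by
  have hsetLeft (z : K) (A : Finset ℕ) (b' : ℕ) :
      subRank (setEntry Z i j z) A (Ico b' j) = subRank Z A (Ico b' j) :=
    subRank_setEntry Z z (.inr (by simp))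
  have hsetBelow (z : K) (a'' : ℕ) (B : Finset ℕ) :
      subRank (setEntry Z i j z) (Ico (i + 1) a'') B = subRank Z (Ico (i + 1) a'') B :=
    subRank_setEntry Z z (.inl (by simp))
  have hinsertRow {a'' : ℕ} (h : i < a'') := insert_Ico_add_one_left_eq_Ico h
  have hinsertCol {b' : ℕ} (h : b' ≤ j) := insert_Ico_right_eq_Ico_add_one h
  rw [← hinsertCol hb] at hcol
  rw [← hinsertRow ha] at hrow
  obtain ⟨z, hzcol, hzrow⟩ := exists_setEntry_subRank_insert_le (by simp) (by simp) hcol hrow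
  have hz : v z ≤ v (g i j) := by
    refine hZ.map_le_of_subRank_setEntry_le hg hj ha hb ham hab ?_
    rw [← hinsertRow ha, ← hinsertCol hb]
    exact hzrow.trans ((hsetBelow z _ _).trans_le hcol)
  refine ⟨_, hZ.next_col_setEntry hP hz fun {a' b'} ha' hb' ham' hab' => ?_⟩
  -- Corners on the bottom or left edge are totally ordered. A block with fewer rows and more
  -- columns gets no rank from column `j`, one with more rows and fewer columns gets none from
  -- row `i`.
  rcases (by omega : a' ≤ a ∧ b' ≤ b ∨ a ≤ a' ∧ b ≤ b') with ⟨haa, hbb⟩ | ⟨haa, hbb⟩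
  · refine (hZ.hasChain_left hj ham' hab').mono ?_ subset_rfl subset_rfl
    rw [← hsetLeft z, ← hinsertCol hb']
    refine subRank_insert_col_le_of_subset ?_ (Ico_subset_Ico_left hbb) hzcol
    exact hinsertRow ha ▸ Ico_subset_Ico_right haa
  · refine (hZ.hasChain_below hj ham' hab').mono ?_ subset_rfl subset_rfl
    rw [← hsetBelow z, ← hinsertRow ha']
    refine subRank_insert_row_le_of_subset (Ico_subset_Ico_right haa) ?_ hzrow
    exact hinsertCol hb ▸ Ico_subset_Ico_left hbb

theorem exists_next_col (hZ : IsFilledTo v g P m n i j Z)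
    (hg : IsMongeOn v g (range m) (range n)) (hi : i < m) (hj : j < n) :
    ∃ Z', IsFilledTo v g P m n i (j + 1) Z' := by
  by_cases hP : P i j
  · refine ⟨_, hZ.next_col_pivotFill hg hi hj fun ha hb ham hab => ?_⟩
    rw [← insert_Ico_add_one_left_eq_Ico ha, ← insert_Ico_right_eq_Ico_add_one hb]
    exact (hZ.hasChain_below_left hj ham hab).cons hP (fun r hr => (mem_Ico.1 hr).1)
      (fun s hs => (mem_Ico.1 hs).2)
  by_cases hcompl : ∃ a b, (i < a ∧ b ≤ j ∧ a ≤ m ∧ (a = m ∨ b = 0)) ∧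
      subRank Z (Ico (i + 1) a) (Ico b (j + 1)) ≤ subRank Z (Ico (i + 1) a) (Ico b j) ∧
      subRank Z (Ico i a) (Ico b j) ≤ subRank Z (Ico (i + 1) a) (Ico b j)
  · obtain ⟨a, b, ⟨ha, hb, ham, hab⟩, hcol, hrow⟩ := hcompl
    exact hZ.exists_next_col_of_subRank_le hg hj hP ha hb ham hab hcol hrow
  -- In every block row `i` or column `j` raises the rank already, so the pivot is free.
  · refine ⟨_, hZ.next_col_pivotFill hg hi hj fun {a b} ha hb ham hab => ?_⟩
    by_cases hcol : subRank Z (Ico (i + 1) a) (Ico b (j + 1)) ≤ subRank Z (Ico (i + 1) a) (Ico b j)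
    · have hrow := not_le.1 fun hrow => hcompl ⟨a, b, ⟨ha, hb, ham, hab⟩, hcol, hrow⟩
      exact (hZ.hasChain_left hj ham hab).mono hrow subset_rfl subset_rfl
    · exact (hZ.hasChain_below hj ham hab).mono (not_le.1 hcol) subset_rfl subset_rfl

theorem exists_row_end (hZ : IsFilledTo v g P m n i 0 Z)
    (hg : IsMongeOn v g (range m) (range n)) (hi : i < m) :
    ∃ Z', IsFilledTo v g P m n i n Z' := by
  suffices ∀ j ≤ n, ∃ Z', IsFilledTo v g P m n i j Z' from this n le_rfl
  intro j
  induction j with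
  | zero => exact fun _ => ⟨Z, hZ⟩
  | succ j ih => exact fun hj => (ih (by omega)).elim fun _ h => h.exists_next_col hg hi hj

theorem bottom (Z : Matrix ℕ ℕ K) : IsFilledTo v g P m n m n Z where
  leadsAt h := by unfold IsProcessed at h; omega
  hasChain h := hasAntidiagChain_subRank_of_le (by unfold IsStageBlock at h; omega)

end IsFilledTo

theorem exists_isFilledTo (hg : IsMongeOn v g (range m) (range n)) :
    ∃ Z, IsFilledTo v g P m n 0 n Z := by
  suffices ∀ k ≤ m, ∃ Z, IsFilledTo v g P m n (m - k) n Z by simpa using this m le_rfl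
  intro k
  induction k with
  | zero => exact fun _ => ⟨0, .bottom 0⟩
  | succ k ih =>
    intro hk
    obtain ⟨Z, hZ⟩ := ih (by omega)
    rw [show m - k = m - (k + 1) + 1 by omega] at hZ
    exact hZ.next_row.exists_row_end hg (by omega)

theorem exists_leadsAt_and_hasAntidiagChain_subRank (hg : IsMongeOn v g (range m) (range n)) :
    ∃ Z : Matrix ℕ ℕ K, (∀ r < m, ∀ s < n, LeadsAt v g P Z r s) ∧
      ∀ a a' b c, a' ≤ m → c ≤ n → (a = 0 ∨ c = n) → (a' = m ∨ b = 0) →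
        HasAntidiagChain P (subRank Z (Ico a a') (Ico b c)) (Ico a a') (Ico b c) := by
  obtain ⟨Z, hZ⟩ := exists_isFilledTo (P := P) hg
  refine ⟨Z, fun r hr s hs => hZ.leadsAt ?_, fun a a' b c ha hc hNE hSW => hZ.hasChain ?_⟩
  · unfold IsProcessed; omega
  · unfold IsStageBlock; omega

end Filling

section TermOrderValuation

variable {σ : Type}

namespace TermOrder

/-- Exponent vectors with the reverse of a term order: large monomials are to have small order as
Hahn series. -/
def RevExponent (_ord : TermOrder σ) : Type := σ →₀ ℕ

variable (ord : TermOrder σ)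

noncomputable instance : AddCommMonoid ord.RevExponent :=
  inferInstanceAs (AddCommMonoid (σ →₀ ℕ))

noncomputable instance : AddCancelCommMonoid ord.RevExponent where
  add_left_cancel _ _ _ h := add_left_cancel (G := σ →₀ ℕ) h

noncomputable instance : LinearOrder ord.RevExponent where
  le u w := ord.le w u
  le_refl u := ord.le_refl u
  le_trans u v w huv hvw := ord.le_trans w v u hvw huv
  le_antisymm u w huw hwu := ord.le_antisymm u w hwu huw
  le_total u w := ord.le_total w u
  toDecidableLE := Classical.decRel _

instance : IsOrderedAddMonoid ord.RevExponent where
  add_le_add_left u w huw t := ord.add_le_add w u t huw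

instance : IsOrderedCancelAddMonoid ord.RevExponent :=
  IsOrderedAddMonoid.toIsOrderedCancelAddMonoid'

/-- The identity map, between the type of exponent vectors and its reordered copy. -/
noncomputable def toRevExponent : (σ →₀ ℕ) →+ ord.RevExponent :=
  AddMonoidHom.id (σ →₀ ℕ)

/-- Hahn series whose exponents are differences of exponent vectors. -/
abbrev HahnField : Type := HahnSeries (Algebra.GrothendieckAddGroup ord.RevExponent) ℂ

/-- The valuation of a Hahn series measures its leading exponent with respect to `ord`. -/
noncomputable def leadValuation : Valuation ord.HahnField
    (Multiplicative (WithTop (Algebra.GrothendieckAddGroup ord.RevExponent))ᵒᵈ) :=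
  AddValuation.toValuation (HahnSeries.addVal _ ℂ)

/-- The monomial with exponent vector `u` as a Hahn series. -/
noncomputable def hahnMonomial (u : σ →₀ ℕ) : ord.HahnField :=
  HahnSeries.single (Algebra.GrothendieckAddGroup.of (ord.toRevExponent u)) 1

theorem hahnMonomial_zero : ord.hahnMonomial 0 = 1 := by
  rw [hahnMonomial, map_zero, map_zero, HahnSeries.single_zero_one]

theorem hahnMonomial_add (u w : σ →₀ ℕ) :
    ord.hahnMonomial (u + w) = ord.hahnMonomial u * ord.hahnMonomial w := by
  rw [hahnMonomial, map_add, map_add, hahnMonomial, hahnMonomial, HahnSeries.single_mul_single,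
    one_mul]

theorem hahnMonomial_single (p : σ) (k : ℕ) :
    ord.hahnMonomial (Finsupp.single p k) = ord.hahnMonomial (Finsupp.single p 1) ^ k := by
  induction k with
  | zero => rw [Finsupp.single_zero, hahnMonomial_zero, pow_zero]
  | succ k ih => rw [Finsupp.single_add, hahnMonomial_add, ih, pow_succ]

theorem prod_hahnMonomial_single_pow (u : σ →₀ ℕ) :
    (u.prod fun p k => ord.hahnMonomial (Finsupp.single p 1) ^ k) = ord.hahnMonomial u := by
  induction u using Finsupp.induction_linear with
  | zero => rw [Finsupp.prod_zero_index, hahnMonomial_zero]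
  | single p k => rw [Finsupp.prod_single_index (by exact pow_zero _), hahnMonomial_single ord p k]
  | add u w hu hw =>
    rw [Finsupp.prod_add_index' (fun _ => pow_zero _) fun _ => pow_add _, hu, hw, hahnMonomial_add]

theorem leadValuation_hahnMonomial_le_iff (u w : σ →₀ ℕ) :
    ord.leadValuation (ord.hahnMonomial u) ≤ ord.leadValuation (ord.hahnMonomial w) ↔
      ord.le u w := by
  simp only [leadValuation, AddValuation.toValuation_apply, HahnSeries.addVal_apply, hahnMonomial,
    HahnSeries.orderTop_single one_ne_zero, Multiplicative.ofAdd_le, OrderDual.toDual_le_toDual,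
    WithTop.coe_le_coe]
  exact (AddLocalization.mkOrderEmbedding (α := ord.RevExponent)
    (0 : (⊤ : AddSubmonoid _))).le_iff_le

/-- The valuation `v` compares monomials in the elements `x p` in the same way as `ord`, and is
trivial on the nonzero constants, which are embedded by `φ`. -/
structure IsRealizedBy {K Γ₀ : Type*} [Field K] [LinearOrderedCommGroupWithZero Γ₀]
    (ord : TermOrder σ) (φ : ℂ →+* K) (v : Valuation K Γ₀) (x : σ → K) : Prop where
  map_const : ∀ c : ℂ, c ≠ 0 → v (φ c) = 1
  map_prod_le_iff : ∀ u w : σ →₀ ℕ,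
    v (u.prod fun p k => x p ^ k) ≤ v (w.prod fun p k => x p ^ k) ↔ ord.le u w

theorem isRealizedBy_leadValuation :
    ord.IsRealizedBy HahnSeries.C ord.leadValuation fun p =>
      ord.hahnMonomial (Finsupp.single p 1) where
  map_const c hc := by
    rw [leadValuation, AddValuation.toValuation_apply, HahnSeries.addVal_apply,
      HahnSeries.C_apply, HahnSeries.orderTop_single hc]
    rfl
  map_prod_le_iff u w := by
    rw [prod_hahnMonomial_single_pow, prod_hahnMonomial_single_pow,
      leadValuation_hahnMonomial_le_iff]

namespace IsRealizedBy

variable {ord} {K Γ₀ : Type*} [Field K] [LinearOrderedCommGroupWithZero Γ₀] {φ : ℂ →+* K}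
  {v : Valuation K Γ₀} {x : σ → K}

theorem map_prod_lt (h : ord.IsRealizedBy φ v x) {u w : σ →₀ ℕ} (hle : ord.le u w) (hne : u ≠ w) :
    v (u.prod fun p k => x p ^ k) < v (w.prod fun p k => x p ^ k) :=
  lt_of_not_ge fun hge => hne (ord.le_antisymm u w hle ((h.map_prod_le_iff w u).1 hge))

theorem ne_zero (h : ord.IsRealizedBy φ v x) (p : σ) : x p ≠ 0 := by
  have hlt := h.map_prod_lt (ord.zero_le (Finsupp.single p 1)) (by simp [eq_comm])
  rw [Finsupp.prod_single_index (by exact pow_zero _), pow_one] at hlt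
  exact (Valuation.ne_zero_iff v).1 (ne_zero_of_lt hlt)

theorem eval₂_ne_zero (h : ord.IsRealizedBy φ v x) {f : MvPolynomial σ ℂ} {u : σ →₀ ℕ}
    (hf : IsInitExp ord f u) {z : σ → K} (hz : ∀ p, v (z p) ≤ v (x p))
    (hzu : ∀ p, u p ≠ 0 → v (z p) = v (x p)) : MvPolynomial.eval₂ φ z f ≠ 0 := by
  classical
  have map_term : ∀ w ∈ f.support, v (φ (f.coeff w) * w.prod fun p k => z p ^ k) =
      w.prod fun p k => v (z p) ^ k := fun w hw => by
    rw [map_mul, h.map_const _ (MvPolynomial.mem_support_iff.1 hw), one_mul, map_finsuppProd]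
    simp only [map_pow]
  have map_lead : v (φ (f.coeff u) * u.prod fun p k => z p ^ k) =
      v (u.prod fun p k => x p ^ k) := by
    rw [map_term u hf.1, map_finsuppProd]
    exact Finsupp.prod_congr fun p hp => by rw [hzu p (Finsupp.mem_support_iff.1 hp), map_pow]
  have lead_ne_zero : v (φ (f.coeff u) * u.prod fun p k => z p ^ k) ≠ 0 := by
    rw [map_lead, Valuation.ne_zero_iff]
    exact Finset.prod_ne_zero_iff.2 fun p _ => pow_ne_zero _ (h.ne_zero p)
  have map_tail_lt : v (∑ w ∈ f.support.erase u, φ (f.coeff w) * w.prod fun p k => z p ^ k) <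
      v (φ (f.coeff u) * u.prod fun p k => z p ^ k) := by
    refine Valuation.map_sum_lt v lead_ne_zero fun w hw => ?_
    obtain ⟨hwu, hwf⟩ := Finset.mem_erase.1 hw
    rw [map_term w hwf, map_lead]
    refine lt_of_le_of_lt ?_ (h.map_prod_lt (hf.2 w hwf) hwu)
    simp only [map_finsuppProd, map_pow]
    exact Finset.prod_le_prod' fun p _ => pow_le_pow_left' (hz p) _
  rw [← Valuation.ne_zero_iff v, MvPolynomial.eval₂_eq, ← Finset.add_sum_erase _ _ hf.1]
  exact (Valuation.map_add_eq_of_lt_left v map_tail_lt).trans_ne lead_ne_zero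

end IsRealizedBy

end TermOrder

end TermOrderValuation

section InitialIdeals

variable {σ : Type} {ord : TermOrder σ}

theorem IsInitExp.unique {f : MvPolynomial σ ℂ} {u w : σ →₀ ℕ} (hu : IsInitExp ord f u)
    (hw : IsInitExp ord f w) : u = w :=
  ord.le_antisymm _ _ (hw.2 u hu.1) (hu.2 w hw.1)

theorem monomial_mem_span_init_iff {G : Set (MvPolynomial σ ℂ)} {u : σ →₀ ℕ} :
    MvPolynomial.monomial u (1 : ℂ) ∈
        Ideal.span {p | ∃ g ∈ G, ∃ w, IsInitExp ord g w ∧ p = MvPolynomial.monomial w (1 : ℂ)} ↔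
      ∃ g ∈ G, ∃ w, IsInitExp ord g w ∧ w ≤ u := by
  have image_eq : {p | ∃ g ∈ G, ∃ w, IsInitExp ord g w ∧ p = MvPolynomial.monomial w (1 : ℂ)} =
      (fun w => MvPolynomial.monomial w (1 : ℂ)) '' {w | ∃ g ∈ G, IsInitExp ord g w} := by
    ext p
    constructor
    · rintro ⟨g, hg, w, hw, rfl⟩
      exact ⟨w, ⟨g, hg, hw⟩, rfl⟩
    · rintro ⟨w, ⟨g, hg, hw⟩, rfl⟩
      exact ⟨g, hg, w, hw, rfl⟩
  rw [image_eq, MvPolynomial.mem_ideal_span_monomial_image,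
    MvPolynomial.support_monomial, if_neg one_ne_zero]
  simp only [Finset.mem_singleton, forall_eq]
  exact ⟨fun ⟨w, ⟨g, hg, hgw⟩, hwu⟩ => ⟨g, hg, w, hgw, hwu⟩,
    fun ⟨g, hg, w, hgw, hwu⟩ => ⟨w, ⟨g, hg, hgw⟩, hwu⟩⟩

theorem isGroebnerBasis_span {m n : ℕ} {ord : TermOrder (Fin m × Fin n)}
    {G : Set (MvPolynomial (Fin m × Fin n) ℂ)}
    (h : ∀ f ∈ Ideal.span G, ∀ u, IsInitExp ord f u → ∃ g ∈ G, ∃ w, IsInitExp ord g w ∧ w ≤ u) :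
    IsGroebnerBasis ord (Ideal.span G) G := by
  refine ⟨Ideal.subset_span, le_antisymm (Ideal.span_le.2 ?_) (Ideal.span_mono ?_)⟩
  · rintro _ ⟨f, hf, u, hu, rfl⟩
    exact monomial_mem_span_init_iff.2 (h f hf u hu)
  · rintro _ ⟨g, hg, u, hu, rfl⟩
    exact ⟨g, Ideal.subset_span hg, u, hu, rfl⟩

end InitialIdeals

section Minors

open Finset

theorem sum_single_one_apply {ι α : Type*} [Fintype ι] {p : ι → α} (hp : Function.Injective p)
    (q : α) [Decidable (q ∈ Set.range p)] :
    (∑ i, Finsupp.single (p i) 1 : α →₀ ℕ) q = if q ∈ Set.range p then 1 else 0 := by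
  classical
  rw [Finsupp.finsetSum_apply]
  split_ifs with hq
  · obtain ⟨j, rfl⟩ := hq
    simp [Finsupp.single_apply, hp.eq_iff]
  · exact sum_eq_zero fun i _ => Finsupp.single_eq_of_ne fun h => hq ⟨i, h.symm⟩

theorem sum_single_one_le_iff {ι α : Type*} [Fintype ι] {p : ι → α} (hp : Function.Injective p)
    {u : α →₀ ℕ} : ∑ i, Finsupp.single (p i) 1 ≤ u ↔ ∀ i, u (p i) ≠ 0 := by
  classical
  simp only [Finsupp.le_def, sum_single_one_apply hp]
  refine ⟨fun h i => Nat.one_le_iff_ne_zero.1 (by simpa using h (p i)), fun h q => ?_⟩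
  split_ifs with hq
  · obtain ⟨i, rfl⟩ := hq
    exact Nat.one_le_iff_ne_zero.2 (h i)
  · exact Nat.zero_le _

variable {m n d : ℕ} {r : Fin d → Fin m} {c : Fin d → Fin n}

/-- The exponent vector of the term of a minor that belongs to the permutation `σ`. -/
noncomputable def permExp (r : Fin d → Fin m) (c : Fin d → Fin n) (σ : Equiv.Perm (Fin d)) :
    (Fin m × Fin n) →₀ ℕ :=
  ∑ i, Finsupp.single (r i, c (σ i)) 1

theorem antidiagExp_eq_permExp : antidiagExp m n d r c = permExp r c Fin.revPerm :=
  rfl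

theorem prod_permExp {K : Type*} [CommMonoid K] (x : Fin m × Fin n → K)
    (σ : Equiv.Perm (Fin d)) :
    ((permExp r c σ).prod fun p k => x p ^ k) = ∏ i, x (r i, c (σ i)) := by
  rw [permExp, ← Finsupp.prod_finsetSum_index (fun _ => pow_zero _) fun _ => pow_add _]
  exact prod_congr rfl fun i _ => by rw [Finsupp.prod_single_index (by exact pow_zero _), pow_one]

theorem permExp_apply_of_notMem_range (σ : Equiv.Perm (Fin d)) {q : Fin m × Fin n}
    (hq : ∀ a b, (r a, c b) ≠ q) : permExp r c σ q = 0 := by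
  rw [permExp, Finsupp.finsetSum_apply]
  exact sum_eq_zero fun i _ => Finsupp.single_eq_of_ne (hq i (σ i)).symm

theorem permExp_apply (hr : Function.Injective r) (hc : Function.Injective c)
    (σ : Equiv.Perm (Fin d)) (a b : Fin d) :
    permExp r c σ (r a, c b) = if σ a = b then 1 else 0 := by
  classical
  rw [permExp, sum_single_one_apply fun i j hij => hr (congrArg Prod.fst hij)]
  simp [hr.eq_iff, hc.eq_iff]

theorem permExp_injective (hr : Function.Injective r) (hc : Function.Injective c) :
    Function.Injective (permExp r c) := fun σ τ h => Equiv.ext fun a => by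
  have happly := DFunLike.congr_fun h (r a, c (σ a))
  rw [permExp_apply hr hc, permExp_apply hr hc, if_pos rfl] at happly
  exact (of_not_not fun hne => by simp [hne] at happly : τ a = σ a).symm

theorem genMinor_eq_sum_monomial :
    genMinor m n d r c = ∑ σ : Equiv.Perm (Fin d),
      MvPolynomial.monomial (permExp r c σ) ((Equiv.Perm.sign σ : ℤ) : ℂ) := by
  rw [genMinor, ← Matrix.det_transpose, Matrix.det_apply']
  refine sum_congr rfl fun σ _ => ?_
  have hprod : ∏ i, (MvPolynomial.X (r i, c (σ i)) : MvPolynomial (Fin m × Fin n) ℂ) =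
      MvPolynomial.monomial (permExp r c σ) 1 := by
    rw [permExp, MvPolynomial.monomial_sum_one]
    rfl
  simp only [Matrix.transpose_apply, Matrix.of_apply]
  rw [hprod, ← map_intCast (MvPolynomial.C : ℂ →+* MvPolynomial (Fin m × Fin n) ℂ),
    MvPolynomial.C_mul_monomial, mul_one]

theorem permExp_mem_support_genMinor (hr : Function.Injective r) (hc : Function.Injective c)
    (σ : Equiv.Perm (Fin d)) : permExp r c σ ∈ (genMinor m n d r c).support := by
  classical
  rw [MvPolynomial.mem_support_iff, genMinor_eq_sum_monomial, MvPolynomial.coeff_sum]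
  simp [MvPolynomial.coeff_monomial, (permExp_injective hr hc).eq_iff]

theorem exists_eq_permExp_of_mem_support_genMinor {w : (Fin m × Fin n) →₀ ℕ}
    (hw : w ∈ (genMinor m n d r c).support) : ∃ σ, w = permExp r c σ := by
  classical
  rw [genMinor_eq_sum_monomial] at hw
  obtain ⟨σ, -, hσ⟩ := mem_biUnion.1 (MvPolynomial.support_sum hw)
  exact ⟨σ, mem_singleton.1 (MvPolynomial.support_monomial_subset hσ)⟩

end Minors

section AntidiagonalLex

variable {m n d : ℕ} {ord : TermOrder (Fin m × Fin n)} {r : Fin d → Fin m} {c : Fin d → Fin n}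

theorem lexRank_lt_iff {p q : Fin m × Fin n} :
    lexRank m n q < lexRank m n p ↔ q.1 < p.1 ∨ q.1 = p.1 ∧ p.2 < q.2 := by
  obtain ⟨⟨i, hi⟩, ⟨j, hj⟩⟩ := q
  obtain ⟨⟨k, hk⟩, ⟨l, hl⟩⟩ := p
  simp only [lexRank, Fin.mk_lt_mk, Fin.mk.injEq]
  rcases lt_trichotomy i k with hik | rfl | hki
  · have hmul : (i + 1) * n ≤ k * n := Nat.mul_le_mul_right _ hik
    rw [add_mul] at hmul
    omega
  · omega
  · have hmul : (k + 1) * n ≤ i * n := Nat.mul_le_mul_right _ hki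
    rw [add_mul] at hmul
    omega

theorem exists_lt_rev_of_ne_revPerm {σ : Equiv.Perm (Fin d)} (hσ : σ ≠ Fin.revPerm) :
    ∃ a, σ a < a.rev ∧ ∀ b < a, σ b = b.rev := by
  obtain ⟨a, ha, hmin⟩ := WellFounded.has_min (wellFounded_lt (α := Fin d))
    {a | σ a ≠ a.rev} (by by_contra! h; exact hσ (Equiv.ext (by simpa using Set.ext_iff.1 h)))
  have eq_rev : ∀ b < a, σ b = b.rev := fun b hb => of_not_not fun hne => hmin b hne hb
  refine ⟨a, lt_of_not_ge fun hge => ?_, eq_rev⟩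
  have hlt : (σ a).rev < a := by
    rw [← Fin.rev_lt_rev, Fin.rev_rev]
    exact lt_of_le_of_ne hge (Ne.symm ha)
  have hfix := eq_rev _ hlt
  rw [Fin.rev_rev] at hfix
  exact hlt.ne (σ.injective hfix)

theorem IsAntidiagLex.permExp_le (hord : IsAntidiagLex m n ord) (hr : StrictMono r)
    (hc : StrictMono c) (σ : Equiv.Perm (Fin d)) :
    ord.le (permExp r c σ) (permExp r c Fin.revPerm) := by
  rw [hord]
  by_cases hσ : σ = Fin.revPerm
  · exact .inl (by rw [hσ])
  obtain ⟨a, ha, eq_rev⟩ := exists_lt_rev_of_ne_revPerm hσ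
  refine .inr ⟨(r a, c a.rev), ?_, fun q hq => ?_⟩
  · simp [permExp_apply hr.injective hc.injective, ha.ne]
  by_cases him : ∃ b l, (r b, c l) = q
  · obtain ⟨b, l, rfl⟩ := him
    simp only [lexRank_lt_iff, hr.lt_iff_lt, hc.lt_iff_lt, hr.injective.eq_iff] at hq
    rw [permExp_apply hr.injective hc.injective, permExp_apply hr.injective hc.injective,
      Fin.revPerm_apply]
    rcases hq with hba | ⟨rfl, hal⟩
    · rw [eq_rev b hba]
    · rw [if_neg (ha.trans hal).ne, if_neg hal.ne]
  · push Not at him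
    rw [permExp_apply_of_notMem_range _ him, permExp_apply_of_notMem_range _ him]

theorem IsAntidiagLex.isAntidiagonalOrder (hord : IsAntidiagLex m n ord) :
    IsAntidiagonalOrder m n ord := fun d _ r c hr hc => by
  refine ⟨permExp_mem_support_genMinor hr.injective hc.injective Fin.revPerm, fun w hw => ?_⟩
  obtain ⟨σ, rfl⟩ := exists_eq_permExp_of_mem_support_genMinor hw
  exact hord.permExp_le hr hc σ

end AntidiagonalLex

section GroebnerBases

open Finset

theorem HasAntidiagChain.of_strictMono {ι ι' κ κ' : Type*} [LinearOrder ι] [LinearOrder ι']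
    [LinearOrder κ] [LinearOrder κ'] {P : ι → κ → Prop} {Q : ι' → κ' → Prop} {k : ℕ}
    {A : Finset ι} {A' : Finset ι'} {B : Finset κ} {B' : Finset κ'} {f : ι' → ι} {g : κ' → κ}
    (hf : StrictMono f) (hg : StrictMono g)
    (hlift : ∀ r ∈ A, ∀ s ∈ B, P r s → ∃ i ∈ A', ∃ j ∈ B', f i = r ∧ g j = s ∧ Q i j)
    (h : HasAntidiagChain P k A B) : HasAntidiagChain Q k A' B' := by
  obtain ⟨r, s, hr, hs, hrs⟩ := h
  choose i hi j hj hir hjs hQ using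
    fun t => hlift (r t) (hrs t).1 (s t) (hrs t).2.1 (hrs t).2.2
  refine ⟨i, j, fun t t' htt' => hf.lt_iff_lt.1 ?_, fun t t' htt' => hg.lt_iff_lt.1 ?_,
    fun t => ⟨hi t, hj t, hQ t⟩⟩
  · rw [hir, hir]
    exact hr htt'
  · rw [hjs, hjs]
    exact hs htt'

theorem subRank_submatrix_le {ι ι' κ κ' K : Type*} [Field K] (Z : Matrix ι κ K) {f : ι' → ι}
    {g : κ' → κ} {A : Finset ι} {A' : Finset ι'} {B : Finset κ} {B' : Finset κ'}
    (hf : ∀ i ∈ A', f i ∈ A) (hg : ∀ j ∈ B', g j ∈ B) :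
    subRank (Z.submatrix f g) A' B' ≤ subRank Z A B :=
  Matrix.rank_submatrix_le (Z.submatrix (Subtype.val : A → ι) (Subtype.val : B → κ))
    (fun i : A' => (⟨f i, hf i i.2⟩ : A)) (fun j : B' => (⟨g j, hg j j.2⟩ : B))

theorem le_subRank_of_det_ne_zero {ι κ K : Type*} [Field K] {Z : Matrix ι κ K} {A : Finset ι}
    {B : Finset κ} {d : ℕ} {r : Fin d → ι} {c : Fin d → κ} (hr : ∀ i, r i ∈ A)
    (hc : ∀ j, c j ∈ B) (hdet : (Z.submatrix r c).det ≠ 0) : d ≤ subRank Z A B :=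
  calc d = (Z.submatrix r c).rank := by
        rw [Matrix.rank_of_det_ne_zero hdet, Fintype.card_fin]
    _ ≤ subRank Z A B :=
      Matrix.rank_submatrix_le (Z.submatrix (Subtype.val : A → ι) (Subtype.val : B → κ))
        (fun i => ⟨r i, hr i⟩) (fun j => ⟨c j, hc j⟩)

/-- The indices of the 1-based interval `[a, a']`, as elements of `Fin N`. -/
def window (N a a' : ℕ) : Finset (Fin N) :=
  univ.filter fun i => a ≤ i.1 + 1 ∧ i.1 + 1 ≤ a'

theorem mem_window {N a a' : ℕ} {i : Fin N} : i ∈ window N a a' ↔ a ≤ i.1 + 1 ∧ i.1 + 1 ≤ a' := by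
  simp [window]

/-- The block `[a, a'] × [b, b']` of an `m × n` matrix is northwest-justified,
southeast-justified, a set of full columns or a set of full rows: it touches the top or right edge
and the bottom or left edge. -/
def IsJustified (m n a a' b b' : ℕ) : Prop :=
  (a ≤ 1 ∨ n ≤ b') ∧ (m ≤ a' ∨ b ≤ 1)

variable {m n : ℕ}

/-- The extension by zero of a matrix on `Fin m × Fin n` to `ℕ × ℕ`. -/
def extendZero {K : Type*} [Zero K] (g : Matrix (Fin m) (Fin n) K) : Matrix ℕ ℕ K :=
  Matrix.of fun r s => if h : r < m ∧ s < n then g ⟨r, h.1⟩ ⟨s, h.2⟩ else 0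

theorem extendZero_val {K : Type*} [Zero K] (g : Matrix (Fin m) (Fin n) K) (i : Fin m)
    (j : Fin n) : extendZero g i j = g i j := by
  simp [extendZero]

section Specialization

variable {K Γ₀ : Type*} [Field K] [LinearOrderedCommGroupWithZero Γ₀] {v : Valuation K Γ₀}

theorem IsMongeOn.extendZero {g : Matrix (Fin m) (Fin n) K} (hg : IsMongeOn v g univ univ) :
    IsMongeOn v (extendZero g) (range m) (range n) where
  ne_zero r hr s hs := by
    lift r to Fin m using mem_range.1 hr
    lift s to Fin n using mem_range.1 hs
    rw [extendZero_val]
    exact hg.ne_zero r (mem_univ r) s (mem_univ s)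
  mul_lt_mul i hi r hr hir c hc j hj hcj := by
    lift i to Fin m using mem_range.1 hi
    lift r to Fin m using mem_range.1 hr
    lift c to Fin n using mem_range.1 hc
    lift j to Fin n using mem_range.1 hj
    simp only [extendZero_val]
    exact hg.mul_lt_mul i (mem_univ i) r (mem_univ r) hir c (mem_univ c) j (mem_univ j) hcj

theorem IsMongeOn.exists_leadsAt_and_hasAntidiagChain {g : Matrix (Fin m) (Fin n) K}
    (hg : IsMongeOn v g univ univ) (P : Fin m → Fin n → Prop) :
    ∃ Z : Matrix (Fin m) (Fin n) K, (∀ i j, LeadsAt v g P Z i j) ∧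
      ∀ a a' b b', IsJustified m n a a' b b' →
        HasAntidiagChain P (subRank Z (window m a a') (window n b b')) (window m a a')
          (window n b b') := by
  obtain ⟨Z, hZ, hchain⟩ := exists_leadsAt_and_hasAntidiagChain_subRank
    (P := fun r s => ∃ i j, Fin.val i = r ∧ Fin.val j = s ∧ P i j) hg.extendZero
  refine ⟨Z.submatrix Fin.val Fin.val, fun i j => ?_, fun a a' b b' hjust => ?_⟩
  · obtain ⟨hle, heq⟩ := hZ i i.2 j j.2
    rw [extendZero_val] at hle heq
    exact ⟨hle, fun hP => heq ⟨i, j, rfl, rfl, hP⟩⟩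
  · have hblock := hchain (a - 1) (min a' m) (b - 1) (min b' n) (min_le_right _ _)
      (min_le_right _ _) (by unfold IsJustified at hjust; omega)
      (by unfold IsJustified at hjust; omega)
    refine (hblock.mono (subRank_submatrix_le Z (fun i hi => ?_) fun j hj => ?_) subset_rfl
      subset_rfl).of_strictMono Fin.val_strictMono Fin.val_strictMono ?_
    · rw [mem_window] at hi
      rw [mem_Ico]
      omega
    · rw [mem_window] at hj
      rw [mem_Ico]
      omega
    · rintro _ hr _ hs ⟨i, j, rfl, rfl, hP⟩
      rw [mem_Ico] at hr hs
      exact ⟨i, mem_window.2 (by omega), j, mem_window.2 (by omega), rfl, rfl, hP⟩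

end Specialization

variable {ord : TermOrder (Fin m × Fin n)}

theorem TermOrder.IsRealizedBy.isMongeOn {K Γ₀ : Type*} [Field K]
    [LinearOrderedCommGroupWithZero Γ₀] {φ : ℂ →+* K} {v : Valuation K Γ₀}
    {x : Fin m × Fin n → K} (h : ord.IsRealizedBy φ v x) (hord : IsAntidiagonalOrder m n ord) :
    IsMongeOn v (Matrix.of fun i j => x (i, j)) univ univ where
  ne_zero i _ j _ := h.ne_zero (i, j)
  mul_lt_mul i _ r _ hir c _ j _ hcj := by
    have hrow : StrictMono ![i, r] := by simpa [Fin.strictMono_iff_lt_succ] using hir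
    have hcol : StrictMono ![c, j] := by simpa [Fin.strictMono_iff_lt_succ] using hcj
    have hle : ord.le (permExp ![i, r] ![c, j] 1) (permExp ![i, r] ![c, j] Fin.revPerm) := by
      rw [← antidiagExp_eq_permExp]
      exact (hord 2 two_pos _ _ hrow hcol).2 _
        (permExp_mem_support_genMinor hrow.injective hcol.injective 1)
    have hne : (1 : Equiv.Perm (Fin 2)) ≠ Fin.revPerm := by decide
    have hlt := h.map_prod_lt hle ((permExp_injective hrow.injective hcol.injective).ne hne)
    rw [prod_permExp, prod_permExp, Fin.prod_univ_two, Fin.prod_univ_two] at hlt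
    simpa [mul_comm] using hlt

theorem exists_minor_init_le_iff (hord : IsAntidiagonalOrder m n ord) {a a' b b' d : ℕ}
    (hd : 0 < d) {u : (Fin m × Fin n) →₀ ℕ} :
    (∃ g ∈ minorsOfSub m n a a' b b' d, ∃ w, IsInitExp ord g w ∧ w ≤ u) ↔
      HasAntidiagChain (fun i j => u (i, j) ≠ 0) d (window m a a') (window n b b') := by
  have le_iff {r : Fin d → Fin m} {c : Fin d → Fin n} (hr : StrictMono r) :
      antidiagExp m n d r c ≤ u ↔ ∀ t : Fin d, u (r t, c t.rev) ≠ 0 :=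
    sum_single_one_le_iff fun i j hij => hr.injective (congrArg Prod.fst hij)
  constructor
  · rintro ⟨_, ⟨r, c, hr, hc, hra, hcb, rfl⟩, w, hw, hwu⟩
    rw [hw.unique (hord d hd r c hr hc), le_iff hr] at hwu
    exact ⟨r, c ∘ Fin.rev, hr, hc.comp_strictAnti Fin.rev_strictAnti,
      fun t => ⟨mem_window.2 (hra t), mem_window.2 (hcb t.rev), hwu t⟩⟩
  · rintro ⟨r, s, hr, hs, hrs⟩
    have hc : StrictMono (s ∘ Fin.rev) := hs.comp Fin.rev_strictAnti
    refine ⟨genMinor m n d r (s ∘ Fin.rev), ⟨r, s ∘ Fin.rev, hr, hc,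
      fun t => mem_window.1 (hrs t).1, fun t => mem_window.1 (hrs t.rev).2.1, rfl⟩,
      _, hord d hd r _ hr hc, (le_iff hr).2 fun t => ?_⟩
    simpa using (hrs t).2.2

theorem eval₂_genMinor {K : Type*} [CommRing K] (φ : ℂ →+* K) (Z : Matrix (Fin m) (Fin n) K)
    {d : ℕ} (r : Fin d → Fin m) (c : Fin d → Fin n) :
    MvPolynomial.eval₂Hom φ (fun p => Z p.1 p.2) (genMinor m n d r c) =
      (Z.submatrix r c).det := by
  rw [genMinor, RingHom.map_det]
  congr 1
  ext i j
  simp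

variable {κ : Type*} {a a' b b' d : κ → ℕ}

theorem exists_hasAntidiagChain_of_isInitExp (hord : IsAntidiagonalOrder m n ord)
    (hjust : ∀ i, IsJustified m n (a i) (a' i) (b i) (b' i)) {f : MvPolynomial (Fin m × Fin n) ℂ}
    (hf : f ∈ Ideal.span (⋃ i, minorsOfSub m n (a i) (a' i) (b i) (b' i) (d i)))
    {u : (Fin m × Fin n) →₀ ℕ} (hu : IsInitExp ord f u) :
    ∃ i, HasAntidiagChain (fun r s => u (r, s) ≠ 0) (d i) (window m (a i) (a' i))
      (window n (b i) (b' i)) := by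
  by_contra! hno
  have hreal := ord.isRealizedBy_leadValuation
  obtain ⟨Z, hlead, hchain⟩ := (hreal.isMongeOn hord).exists_leadsAt_and_hasAntidiagChain
    fun r s => u (r, s) ≠ 0
  have minors_vanish : Ideal.span (⋃ i, minorsOfSub m n (a i) (a' i) (b i) (b' i) (d i)) ≤
      RingHom.ker (MvPolynomial.eval₂Hom HahnSeries.C fun p => Z p.1 p.2) := by
    refine Ideal.span_le.2 (Set.iUnion_subset fun i => ?_)
    rintro _ ⟨r, c, -, -, hra, hcb, rfl⟩
    rw [SetLike.mem_coe, RingHom.mem_ker, eval₂_genMinor]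
    by_contra hdet
    refine hno i ((hchain _ _ _ _ (hjust i)).mono ?_ subset_rfl subset_rfl)
    exact le_subRank_of_det_ne_zero (fun t => mem_window.2 (hra t))
      (fun t => mem_window.2 (hcb t)) hdet
  exact hreal.eval₂_ne_zero hu (fun p => (hlead p.1 p.2).1) (fun p => (hlead p.1 p.2).2)
    (minors_vanish hf)

theorem isGroebnerBasis_minors_of_isJustified (hord : IsAntidiagonalOrder m n ord)
    (hd : ∀ i, 0 < d i) (hjust : ∀ i, IsJustified m n (a i) (a' i) (b i) (b' i)) :
    IsGroebnerBasis ord (Ideal.span (⋃ i, minorsOfSub m n (a i) (a' i) (b i) (b' i) (d i)))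
      (⋃ i, minorsOfSub m n (a i) (a' i) (b i) (b' i) (d i)) := by
  refine isGroebnerBasis_span fun f hf u hu => ?_
  obtain ⟨i, hi⟩ := exists_hasAntidiagChain_of_isInitExp hord hjust hf hu
  obtain ⟨g, hg, hinit⟩ := (exists_minor_init_le_iff hord (hd i)).2 hi
  exact ⟨g, Set.mem_iUnion_of_mem i hg, hinit⟩

end GroebnerBases

section CrystalMoves

variable {α ι κ : Type*} [LinearOrder α] [LinearOrder ι] [LinearOrder κ] {P Q : ι → κ → Prop}
  {src tgt : ι}

/-- What the lowering operator `f_i` does to supports: `Q` arises from `P` by moving a unit in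
column `c` from row `src` down to the adjacent row `tgt`, and, since the moved unit is the last
unmatched bracket, each later unit of row `src` is matched with a unit of row `tgt`. -/
structure IsLoweringMove (P Q : ι → κ → Prop) (src tgt : ι) (c : κ) : Prop where
  covBy : src ⋖ tgt
  source : P src c
  of_result : ∀ i j, Q i j → P i j ∨ i = tgt ∧ j = c
  exists_match : ∀ y, c < y → P src y → ∃ z, c ≤ z ∧ z < y ∧ P tgt z

/-- A lowering move, or a raising move, which is a lowering move for the reversed orders. -/
def IsCrystalMove (P Q : ι → κ → Prop) (src tgt : ι) : Prop :=
  ∃ c, IsLoweringMove P Q src tgt c ∨ IsLoweringMove (ι := ιᵒᵈ) (κ := κᵒᵈ) P Q src tgt c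

theorem IsCrystalMove.ne (h : IsCrystalMove P Q src tgt) : src ≠ tgt := by
  obtain ⟨c, h | h⟩ := h
  · exact h.covBy.ne
  · exact h.covBy.ne

theorem strictMono_update {f : α → ι} (hf : StrictMono f) {x₀ : α} {v : ι}
    (hlt : ∀ x < x₀, f x < v) (hgt : ∀ x, x₀ < x → v < f x) :
    StrictMono (Function.update f x₀ v) := fun x y hxy => by
  obtain rfl | hx := eq_or_ne x x₀
  · rw [Function.update_self, Function.update_of_ne hxy.ne']
    exact hgt y hxy
  obtain rfl | hy := eq_or_ne y x₀
  · rw [Function.update_self, Function.update_of_ne hx]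
    exact hlt x hxy
  · rw [Function.update_of_ne hx, Function.update_of_ne hy]
    exact hf hxy

theorem IsLoweringMove.exists_chain {c : κ} (h : IsLoweringMove P Q src tgt c) {r : α → ι}
    {s : α → κ} (hr : StrictMono r) (hs : StrictAnti s) (hQ : ∀ x, Q (r x) (s x)) {B : Set κ}
    (hB : B.OrdConnected) (hsB : ∀ x, s x ∈ B) :
    (∃ s', StrictAnti s' ∧ ∀ x, s' x ∈ B ∧ P (r x) (s' x)) ∨
      ∃ x₀, r x₀ = tgt ∧ StrictMono (Function.update r x₀ src) ∧
        ∀ x, P (Function.update r x₀ src x) (s x) := by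
  by_cases hP : ∀ x, P (r x) (s x)
  · exact Or.inl ⟨s, hs, fun x => ⟨hsB x, hP x⟩⟩
  push Not at hP
  obtain ⟨x₀, hx₀⟩ := hP
  obtain ⟨hrx₀, hsx₀⟩ := (h.of_result _ _ (hQ x₀)).resolve_left hx₀
  have hP_of_ne : ∀ x ≠ x₀, P (r x) (s x) := fun x hx =>
    (h.of_result _ _ (hQ x)).resolve_right fun hx' => hx (hr.injective (hx'.1.trans hrx₀.symm))
  have le_src : ∀ x < x₀, r x ≤ src := fun x hx => h.covBy.le_of_lt ((hr hx).trans_eq hrx₀)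
  by_cases hsrc : ∃ x₁, r x₁ = src
  · obtain ⟨x₁, rfl⟩ := hsrc
    have hx₁ : x₁ < x₀ := hr.lt_iff_lt.1 (h.covBy.lt.trans_eq hrx₀.symm)
    obtain ⟨z, hcz, hz, hPz⟩ := h.exists_match (s x₁) (hsx₀.symm.trans_lt (hs hx₁))
      (hP_of_ne x₁ hx₁.ne)
    refine Or.inl ⟨Function.update s x₀ z, ?_, fun x => ?_⟩
    · exact strictMono_update (ι := κᵒᵈ) hs
        (fun x hx => hz.trans_le (hs.antitone (hr.le_iff_le.1 (le_src x hx))))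
        fun x hx => ((hs hx).trans_eq hsx₀).trans_le hcz
    · obtain rfl | hx := eq_or_ne x x₀
      · rw [Function.update_self, hrx₀]
        exact ⟨hB.out (hsB x) (hsB x₁) ⟨hsx₀.trans_le hcz, hz.le⟩, hPz⟩
      · rw [Function.update_of_ne hx]
        exact ⟨hsB x, hP_of_ne x hx⟩
  · refine Or.inr ⟨x₀, hrx₀, ?_, fun x => ?_⟩
    · exact strictMono_update hr (fun x hx => (le_src x hx).lt_of_ne fun hx' => hsrc ⟨x, hx'⟩)
        fun x hx => h.covBy.lt.trans (hrx₀.symm.trans_lt (hr hx))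
    · obtain rfl | hx := eq_or_ne x x₀
      · rw [Function.update_self, hsx₀]
        exact h.source
      · rw [Function.update_of_ne hx]
        exact hP_of_ne x hx

theorem IsCrystalMove.exists_chain (h : IsCrystalMove P Q src tgt) {r : α → ι} {s : α → κ}
    (hr : StrictMono r) (hs : StrictAnti s) (hQ : ∀ x, Q (r x) (s x)) {B : Set κ}
    (hB : B.OrdConnected) (hsB : ∀ x, s x ∈ B) :
    (∃ s', StrictAnti s' ∧ ∀ x, s' x ∈ B ∧ P (r x) (s' x)) ∨
      ∃ x₀, r x₀ = tgt ∧ StrictMono (Function.update r x₀ src) ∧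
        ∀ x, P (Function.update r x₀ src x) (s x) := by
  obtain ⟨c, h | h⟩ := h
  · exact h.exists_chain hr hs hQ hB hsB
  · obtain ⟨s', hs', hP⟩ | ⟨x₀, hx₀, hr', hP⟩ :=
      h.exists_chain (α := αᵒᵈ) hr.dual hs.dual hQ hB.dual hsB
    · exact Or.inl ⟨s', hs'.dual, hP⟩
    · exact Or.inr ⟨x₀, hx₀, hr'.dual, hP⟩

end CrystalMoves

section Words

theorem exists_append_of_lastUnmatched_eq_some {β : Type} {cl op : ℕ} {x : β} :
    ∀ {w : List (ℕ × β)} {o : ℕ}, lastUnmatched cl op w o = some x →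
      ∃ w₁ w₂, w = w₁ ++ (cl, x) :: w₂ ∧ lastUnmatched cl op w₂ 0 = none
  | [], _, h => by simp [lastUnmatched] at h
  | (a, lbl) :: w, o, h => by
    have of_tail : ∀ {o'}, lastUnmatched cl op w o' = some x → ∃ w₁ w₂,
        (a, lbl) :: w = w₁ ++ (cl, x) :: w₂ ∧ lastUnmatched cl op w₂ 0 = none := fun h' => by
      obtain ⟨w₁, w₂, rfl, hw₂⟩ := exists_append_of_lastUnmatched_eq_some h'
      exact ⟨(a, lbl) :: w₁, w₂, rfl, hw₂⟩
    rw [lastUnmatched] at h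
    split_ifs at h with hcl
    · cases htail : lastUnmatched cl op w 0 with
      | some y => exact of_tail (htail.trans (by simpa [htail] using h))
      | none => exact ⟨[], w, by simpa [htail, hcl] using h, htail⟩
    all_goals exact of_tail h

theorem exists_mem_of_lastUnmatched_eq_none {β : Type} {cl op : ℕ} {y : β}
    {w₂ : List (ℕ × β)} :
    ∀ {w₁ : List (ℕ × β)}, lastUnmatched cl op (w₁ ++ (cl, y) :: w₂) 0 = none →
      ∃ z, (op, z) ∈ w₁
  | [], h => by
    cases htail : lastUnmatched cl op w₂ 0 <;> simp [lastUnmatched, htail] at h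
  | (a, lbl) :: w₁, h => by
    obtain rfl | hop := eq_or_ne a op
    · exact ⟨lbl, List.mem_cons_self⟩
    have htail : lastUnmatched cl op (w₁ ++ (cl, y) :: w₂) 0 = none := by
      cases htail : lastUnmatched cl op (w₁ ++ (cl, y) :: w₂) 0
      · rfl
      · simp [lastUnmatched, hop, htail] at h
    obtain ⟨z, hz⟩ := exists_mem_of_lastUnmatched_eq_none htail
    exact ⟨z, List.mem_cons_of_mem _ hz⟩

theorem exists_mem_between_of_lastUnmatched_eq_some {β : Type} {γ : Type*} [Preorder γ]
    {f : ℕ × β → γ} {cl op : ℕ} {w : List (ℕ × β)} (hw : w.Pairwise fun p q => f p ≤ f q) {x : β}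
    (h : lastUnmatched cl op w 0 = some x) :
    (cl, x) ∈ w ∧ ∀ y, (cl, y) ∈ w → f (cl, x) < f (cl, y) →
      ∃ z, (op, z) ∈ w ∧ f (cl, x) ≤ f (op, z) ∧ f (op, z) ≤ f (cl, y) := by
  obtain ⟨w₁, w₂, rfl, hw₂⟩ := exists_append_of_lastUnmatched_eq_some h
  refine ⟨by simp, fun y hy hxy => ?_⟩
  obtain ⟨-, hw', before⟩ := List.pairwise_append.1 hw
  obtain ⟨after, hw'⟩ := List.pairwise_cons.1 hw'
  have hy₂ : (cl, y) ∈ w₂ := by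
    obtain hy | hy := List.mem_append.1 hy
    · exact absurd (before _ hy _ List.mem_cons_self) hxy.not_ge
    · exact (List.mem_cons.1 hy).resolve_left fun heq => hxy.ne (congrArg f heq).symm
  obtain ⟨u, u', rfl⟩ := List.append_of_mem hy₂
  obtain ⟨z, hz⟩ := exists_mem_of_lastUnmatched_eq_none hw₂
  exact ⟨z, by simp [hz], after _ (by simp [hz]),
    (List.pairwise_append.1 hw').2.2 _ hz _ List.mem_cons_self⟩

variable {m n : ℕ}

theorem mem_rowWordLbl_iff {M : Matrix (Fin m) (Fin n) ℕ} {r : Fin m} {c : Fin n} :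
    (r.1 + 1, c) ∈ rowWordLbl M ↔ M r c ≠ 0 := by
  simp only [rowWordLbl, List.mem_flatMap, List.mem_finRange, true_and, List.mem_replicate,
    Prod.mk.injEq, Nat.add_right_cancel_iff]
  constructor
  · rintro ⟨c', r', hM, hr, rfl⟩
    rwa [Fin.ext hr]
  · exact fun hM => ⟨c, r, hM, rfl, rfl⟩

/-- The position of a letter labelled by its column in the column-by-column reading order. -/
def readingKey (p : ℕ × Fin n) : Fin n ×ₗ ℕ :=
  toLex p.swap

theorem readingKey_le_iff {p q : ℕ × Fin n} :
    readingKey p ≤ readingKey q ↔ p.2 < q.2 ∨ p.2 = q.2 ∧ p.1 ≤ q.1 :=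
  Prod.Lex.toLex_le_toLex

theorem readingKey_lt_of_snd_lt {p q : ℕ × Fin n} (h : p.2 < q.2) :
    readingKey p < readingKey q :=
  Prod.Lex.toLex_lt_toLex.2 (Or.inl h)

theorem pairwise_rowWordLbl (M : Matrix (Fin m) (Fin n) ℕ) :
    (rowWordLbl M).Pairwise fun p q => readingKey p ≤ readingKey q := by
  simp only [rowWordLbl, List.pairwise_flatMap, List.mem_flatMap, List.mem_replicate,
    List.pairwise_replicate, readingKey_le_iff]
  refine ⟨fun c _ => ⟨fun r _ => Or.inr (by simp), ?_⟩, ?_⟩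
  · refine (List.pairwise_lt_finRange m).imp ?_
    rintro r r' hr _ ⟨-, rfl⟩ _ ⟨-, rfl⟩
    exact Or.inr ⟨rfl, Nat.succ_le_succ hr.le⟩
  · refine (List.pairwise_lt_finRange n).imp ?_
    rintro c c' hc _ ⟨r, -, -, rfl⟩ _ ⟨r', -, -, rfl⟩
    exact Or.inl hc

theorem isCrystalMove_of_frow_eq_some {M N : Matrix (Fin m) (Fin n) ℕ} {u v : Fin m}
    (huv : u.1 + 1 = v.1) (h : frow v.1 M = some N) :
    IsCrystalMove (fun i j => M i j ≠ 0) (fun i j => N i j ≠ 0) u v := by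
  obtain ⟨v, hv⟩ := v
  obtain rfl : u.1 + 1 = v := huv
  obtain ⟨c, hc, hN⟩ := Option.map_eq_some_iff.1 h
  obtain ⟨hmem, hmatch⟩ := exists_mem_between_of_lastUnmatched_eq_some (pairwise_rowWordLbl M) hc
  have of_result : ∀ i j, N i j ≠ 0 → M i j ≠ 0 ∨ i = ⟨u.1 + 1, hv⟩ ∧ j = c := by
    subst hN
    grind [Matrix.of_apply]
  have exists_match : ∀ y, c < y → M u y ≠ 0 →
      ∃ z, c ≤ z ∧ z < y ∧ M ⟨u.1 + 1, hv⟩ z ≠ 0 := fun y hy hMy => by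
    obtain ⟨z, hz, hle, hge⟩ := hmatch y (mem_rowWordLbl_iff.2 hMy)
      (readingKey_lt_of_snd_lt hy)
    rw [readingKey_le_iff] at hle hge
    exact ⟨z, by grind, by grind, mem_rowWordLbl_iff.1 hz⟩
  exact ⟨c, Or.inl ⟨Fin.covBy_iff.2 (Nat.covBy_iff_add_one_eq.2 rfl), mem_rowWordLbl_iff.1 hmem,
    of_result, exists_match⟩⟩

theorem isCrystalMove_of_erow_eq_some {M N : Matrix (Fin m) (Fin n) ℕ} {u v : Fin m}
    (huv : u.1 + 1 = v.1) (h : erow v.1 M = some N) :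
    IsCrystalMove (fun i j => M i j ≠ 0) (fun i j => N i j ≠ 0) v u := by
  obtain ⟨v, hv⟩ := v
  obtain rfl : u.1 + 1 = v := huv
  obtain ⟨c, hc, hN⟩ := Option.map_eq_some_iff.1 h
  obtain ⟨hmem, hmatch⟩ := exists_mem_between_of_lastUnmatched_eq_some
    (f := OrderDual.toDual ∘ readingKey) (List.pairwise_reverse.2 (pairwise_rowWordLbl M)) hc
  simp only [List.mem_reverse] at hmem hmatch
  have of_result : ∀ i j, N i j ≠ 0 → M i j ≠ 0 ∨ i = u ∧ j = c := by
    subst hN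
    grind [Matrix.of_apply]
  have exists_match : ∀ y < c, M ⟨u.1 + 1, hv⟩ y ≠ 0 →
      ∃ z ≤ c, y < z ∧ M u z ≠ 0 := fun y hy hMy => by
    obtain ⟨z, hz, hle, hge⟩ := hmatch y (mem_rowWordLbl_iff.2 hMy)
      (readingKey_lt_of_snd_lt hy)
    rw [Function.comp_apply, Function.comp_apply, OrderDual.toDual_le_toDual,
      readingKey_le_iff] at hle hge
    exact ⟨z, by grind, by grind, mem_rowWordLbl_iff.1 hz⟩
  exact ⟨c, Or.inr ⟨(Fin.covBy_iff.2 (Nat.covBy_iff_add_one_eq.2 rfl)).toDual,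
    mem_rowWordLbl_iff.1 hmem, of_result, exists_match⟩⟩

end Words

section LeviAction

theorem sameBlock_add_one {I : Finset ℕ} {x : ℕ} (h : x + 1 ∉ I) : SameBlock I x (x + 1) :=
  fun k hk => by
    have hne : k ≠ x + 1 := ne_of_mem_of_not_mem hk h
    omega

theorem SameBlock.symm {I : Finset ℕ} {x y : ℕ} (h : SameBlock I x y) : SameBlock I y x :=
  fun k hk => (h k hk).symm

variable {m n : ℕ}

theorem inLevi_one (I : Finset ℕ) : InLevi I (1 : Matrix (Fin m) (Fin m) ℂ) := by
  refine ⟨isUnit_one, fun a b hab => Matrix.one_apply_ne ?_⟩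
  rintro rfl
  exact hab fun _ _ => Iff.rfl

theorem inLevi_transvection {I : Finset ℕ} {u v : Fin m} (huv : u ≠ v)
    (h : SameBlock I u.1 v.1) : InLevi I (Matrix.transvection u v (1 : ℂ)) := by
  refine ⟨?_, fun a b hab => ?_⟩
  · rw [Matrix.isUnit_iff_isUnit_det, Matrix.det_transvection_of_ne _ _ huv]
    exact isUnit_one
  · rw [Matrix.transvection, Matrix.add_apply, (inLevi_one I).2 a b hab, zero_add,
      Matrix.single_apply_of_ne]
    rintro ⟨rfl, rfl⟩
    exact hab h

theorem det_submatrix_transvection_mul {ι κ R δ : Type*} [Fintype ι] [DecidableEq ι] [Fintype δ]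
    [DecidableEq δ] [CommRing R] (Z : Matrix ι κ R) {r : δ → ι} (hr : Function.Injective r)
    (c : δ → κ) (x₀ : δ) (v : ι) :
    ((Matrix.transvection (r x₀) v (1 : R) * Z).submatrix r c).det =
      (Z.submatrix r c).det + (Z.submatrix (Function.update r x₀ v) c).det := by
  have updateRow_submatrix (w : ι) : (Z.submatrix r c).updateRow x₀ (fun y => Z w (c y)) =
      Z.submatrix (Function.update r x₀ w) c := by
    ext x y
    obtain rfl | hx := eq_or_ne x x₀
    · simp
    · simp [hx]
  have submatrix_mul : (Matrix.transvection (r x₀) v (1 : R) * Z).submatrix r c =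
      (Z.submatrix r c).updateRow x₀ ((fun y => Z (r x₀) (c y)) + fun y => Z v (c y)) := by
    ext x y
    obtain rfl | hx := eq_or_ne x x₀
    · simp
    · simp [hx, hr.ne hx]
  rw [submatrix_mul, Matrix.det_updateRow_add, updateRow_submatrix, updateRow_submatrix,
    Function.update_eq_self]

theorem det_submatrix_mul_transvection_transpose {ι κ R δ : Type*} [Fintype κ] [DecidableEq κ]
    [Fintype δ] [DecidableEq δ] [CommRing R] (Z : Matrix ι κ R) (r : δ → ι) {c : δ → κ}
    (hc : Function.Injective c) (x₀ : δ) (v : κ) :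
    ((Z * (Matrix.transvection (c x₀) v (1 : R)).transpose).submatrix r c).det =
      (Z.submatrix r c).det + (Z.submatrix r (Function.update c x₀ v)).det := by
  have h := det_submatrix_transvection_mul Z.transpose hc r x₀ v
  rwa [← Matrix.transpose_submatrix, ← Matrix.transpose_submatrix, Matrix.det_transpose,
    Matrix.det_transpose, ← Matrix.det_transpose, Matrix.transpose_submatrix,
    Matrix.transpose_mul, Matrix.transpose_transpose] at h

theorem leviAct_genMinor (g : Matrix (Fin m) (Fin m) ℂ) (h : Matrix (Fin n) (Fin n) ℂ) {d : ℕ}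
    (r : Fin d → Fin m) (c : Fin d → Fin n) :
    leviAct g h (genMinor m n d r c) =
      ((g.map (MvPolynomial.C (σ := Fin m × Fin n)) * Matrix.mvPolynomialX (Fin m) (Fin n) ℂ *
        (h.map (MvPolynomial.C (σ := Fin m × Fin n))).transpose).submatrix r c).det := by
  rw [genMinor, AlgHom.map_det]
  congr 1
  ext1 i j
  simp only [AlgHom.mapMatrix_apply, Matrix.map_apply, Matrix.of_apply, leviAct,
    MvPolynomial.aeval_X, Matrix.submatrix_apply, Matrix.mul_apply, Matrix.transpose_apply,
    Matrix.mvPolynomialX_apply, Finset.sum_mul, map_mul]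
  rw [Finset.sum_comm]
  exact Finset.sum_congr rfl fun _ _ => Finset.sum_congr rfl fun _ _ => by ring

theorem genMinor_eq_det_submatrix {d : ℕ} (r : Fin d → Fin m) (c : Fin d → Fin n) :
    genMinor m n d r c = ((Matrix.mvPolynomialX (Fin m) (Fin n) ℂ).submatrix r c).det :=
  rfl

theorem map_C_transvection {σ : Type*} (u v : Fin m) :
    (Matrix.transvection u v (1 : ℂ)).map (MvPolynomial.C (σ := σ)) =
      Matrix.transvection u v 1 := by
  rw [Matrix.transvection, Matrix.map_add _ (map_add _), Matrix.map_one _ (map_zero _) (map_one _),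
    Matrix.map_single, map_one, Matrix.transvection]

variable {I J : Finset ℕ} {Idl : Ideal (MvPolynomial (Fin m × Fin n) ℂ)} {d : ℕ}
  {r : Fin d → Fin m} {c : Fin d → Fin n} {x₀ : Fin d}

theorem LeviStable.genMinor_update_row_mem (hst : LeviStable I J Idl) (hr : Function.Injective r)
    (hmem : genMinor m n d r c ∈ Idl) {v : Fin m} (hne : r x₀ ≠ v)
    (hblock : SameBlock I (r x₀).1 v.1) : genMinor m n d (Function.update r x₀ v) c ∈ Idl := by
  have hact := hst _ _ (inLevi_transvection hne hblock) (inLevi_one J) _ hmem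
  rw [leviAct_genMinor, map_C_transvection, Matrix.map_one _ (map_zero _) (map_one _),
    Matrix.transpose_one, Matrix.mul_one, det_submatrix_transvection_mul _ hr,
    ← genMinor_eq_det_submatrix, ← genMinor_eq_det_submatrix] at hact
  exact (Ideal.add_mem_iff_right _ hmem).1 hact

theorem LeviStable.genMinor_update_col_mem (hst : LeviStable I J Idl) (hc : Function.Injective c)
    (hmem : genMinor m n d r c ∈ Idl) {v : Fin n} (hne : c x₀ ≠ v)
    (hblock : SameBlock J (c x₀).1 v.1) : genMinor m n d r (Function.update c x₀ v) ∈ Idl := by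
  have hact := hst _ _ (inLevi_one I) (inLevi_transvection hne hblock) _ hmem
  rw [leviAct_genMinor, map_C_transvection, Matrix.map_one _ (map_zero _) (map_one _),
    Matrix.one_mul, det_submatrix_mul_transvection_transpose _ _ hc,
    ← genMinor_eq_det_submatrix, ← genMinor_eq_det_submatrix] at hact
  exact (Ideal.add_mem_iff_right _ hmem).1 hact

theorem LeviStable.genMinor_update_comp_rev_mem (hst : LeviStable I J Idl)
    {s : Fin d → Fin n} (hs : Function.Injective s) (hmem : genMinor m n d r (s ∘ Fin.rev) ∈ Idl)
    {v : Fin n} (hne : s x₀ ≠ v) (hblock : SameBlock J (s x₀).1 v.1) :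
    genMinor m n d r (Function.update s x₀ v ∘ Fin.rev) ∈ Idl := by
  rw [← Fin.rev_rev x₀, Function.update_comp_eq_of_injective _ Fin.rev_injective]
  exact hst.genMinor_update_col_mem (hs.comp Fin.rev_injective) hmem
    (by simpa using hne) (by simpa using hblock)

end LeviAction

section Bicrystals

variable {m n : ℕ} {ord : TermOrder (Fin m × Fin n)} {I J : Finset ℕ}
  {M N : Matrix (Fin m) (Fin n) ℕ}

theorem AdmissibleOp.exists_isCrystalMove
    {φ : Matrix (Fin m) (Fin n) ℕ → Option (Matrix (Fin m) (Fin n) ℕ)}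
    (hφ : AdmissibleOp m n I J φ) (h : φ M = some N) :
    (∃ src tgt, SameBlock I tgt.1 src.1 ∧
      IsCrystalMove (fun i j => M i j ≠ 0) (fun i j => N i j ≠ 0) src tgt) ∨
    ∃ src tgt, SameBlock J tgt.1 src.1 ∧
      IsCrystalMove (fun j i => M i j ≠ 0) (fun j i => N i j ≠ 0) src tgt := by
  obtain ⟨_ | i, hi, him, hiI, hop⟩ | ⟨_ | j, hj, hjn, hjJ, hop⟩ := hφ
  · exact absurd hi (lt_irrefl 0)
  · have hblock := sameBlock_add_one hiI
    obtain rfl | rfl := hop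
    · exact Or.inl ⟨⟨i, by omega⟩, ⟨i + 1, him⟩, hblock.symm, isCrystalMove_of_frow_eq_some rfl h⟩
    · exact Or.inl ⟨⟨i + 1, him⟩, ⟨i, by omega⟩, hblock, isCrystalMove_of_erow_eq_some rfl h⟩
  · exact absurd hj (lt_irrefl 0)
  · have hblock := sameBlock_add_one hjJ
    obtain rfl | rfl := hop
    · obtain ⟨N, hN, rfl⟩ := Option.map_eq_some_iff.1 h
      exact Or.inr ⟨⟨j, by omega⟩, ⟨j + 1, hjn⟩, hblock.symm, isCrystalMove_of_frow_eq_some rfl hN⟩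
    · obtain ⟨N, hN, rfl⟩ := Option.map_eq_some_iff.1 h
      exact Or.inr ⟨⟨j + 1, hjn⟩, ⟨j, by omega⟩, hblock, isCrystalMove_of_erow_eq_some rfl hN⟩

theorem mem_matLT_of_genMinor_mem (hord : IsAntidiagonalOrder m n ord)
    {Idl : Ideal (MvPolynomial (Fin m × Fin n) ℂ)} {d : ℕ} (hd : 0 < d) {r : Fin d → Fin m}
    {s : Fin d → Fin n} (hr : StrictMono r) (hs : StrictAnti s)
    (hmem : genMinor m n d r (s ∘ Fin.rev) ∈ Idl) (hM : ∀ t, M (r t) (s t) ≠ 0) :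
    M ∈ matLT ord Idl := by
  refine monomial_mem_span_init_iff.2
    ⟨_, hmem, _, hord d hd r _ hr (hs.comp Fin.rev_strictAnti), ?_⟩
  refine (sum_single_one_le_iff fun i j hij => hr.injective (congrArg Prod.fst hij)).2 fun t => ?_
  simpa [expOf] using hM t

theorem ordConnected_window (N a a' : ℕ) : (window N a a' : Set (Fin N)).OrdConnected where
  out' i hi j hj k hk := by
    rw [Finset.mem_coe, mem_window] at *
    have hik : i.1 ≤ k.1 := hk.1
    have hkj : k.1 ≤ j.1 := hk.2
    omega

section Exchange

variable {Idl : Ideal (MvPolynomial (Fin m × Fin n) ℂ)} {a a' b b' d : ℕ}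

theorem genMinor_mem_of_mem_window (hminors : minorsOfSub m n a a' b b' d ⊆ Idl)
    {r : Fin d → Fin m} {s : Fin d → Fin n} (hr : StrictMono r) (hs : StrictAnti s)
    (hra : ∀ t, r t ∈ window m a a') (hsb : ∀ t, s t ∈ window n b b') :
    genMinor m n d r (s ∘ Fin.rev) ∈ Idl :=
  hminors ⟨r, _, hr, hs.comp Fin.rev_strictAnti, fun t => mem_window.1 (hra t),
    fun t => mem_window.1 (hsb t.rev), rfl⟩

theorem IsCrystalMove.mem_matLT_of_row (hord : IsAntidiagonalOrder m n ord)
    (hst : LeviStable I J Idl) (hd : 0 < d) (hminors : minorsOfSub m n a a' b b' d ⊆ Idl)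
    {src tgt : Fin m} (hblock : SameBlock I tgt.1 src.1)
    (hmove : IsCrystalMove (fun i j => M i j ≠ 0) (fun i j => N i j ≠ 0) src tgt)
    (hN : HasAntidiagChain (fun i j => N i j ≠ 0) d (window m a a') (window n b b')) :
    M ∈ matLT ord Idl := by
  obtain ⟨r, s, hr, hs, hrs⟩ := hN
  obtain ⟨s', hs', hM⟩ | ⟨x₀, rfl, hr', hM⟩ := hmove.exists_chain hr hs (fun t => (hrs t).2.2)
    (ordConnected_window n b b') fun t => (hrs t).2.1
  · exact mem_matLT_of_genMinor_mem hord hd hr hs'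
      (genMinor_mem_of_mem_window hminors hr hs' (fun t => (hrs t).1) fun t => (hM t).1)
      fun t => (hM t).2
  · have hmem := genMinor_mem_of_mem_window hminors hr hs (fun t => (hrs t).1)
      fun t => (hrs t).2.1
    exact mem_matLT_of_genMinor_mem hord hd hr' hs
      (hst.genMinor_update_row_mem hr.injective hmem hmove.ne.symm hblock) hM

theorem IsCrystalMove.mem_matLT_of_col (hord : IsAntidiagonalOrder m n ord)
    (hst : LeviStable I J Idl) (hd : 0 < d) (hminors : minorsOfSub m n a a' b b' d ⊆ Idl)
    {src tgt : Fin n} (hblock : SameBlock J tgt.1 src.1)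
    (hmove : IsCrystalMove (fun j i => M i j ≠ 0) (fun j i => N i j ≠ 0) src tgt)
    (hN : HasAntidiagChain (fun i j => N i j ≠ 0) d (window m a a') (window n b b')) :
    M ∈ matLT ord Idl := by
  obtain ⟨r, s, hr, hs, hrs⟩ := hN
  obtain ⟨r', hr', hM⟩ | ⟨x₀, rfl, hs', hM⟩ := hmove.exists_chain (α := (Fin d)ᵒᵈ)
    hs.dual_left hr.dual_left (fun t => (hrs t).2.2) (ordConnected_window m a a')
    fun t => (hrs t).1
  · exact mem_matLT_of_genMinor_mem hord hd hr'.dual_left hs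
      (genMinor_mem_of_mem_window hminors hr'.dual_left hs (fun t => (hM t).1)
        fun t => (hrs t).2.1) fun t => (hM t).2
  · have hmem := genMinor_mem_of_mem_window hminors hr hs (fun t => (hrs t).1)
      fun t => (hrs t).2.1
    exact mem_matLT_of_genMinor_mem hord hd hr hs'.dual_left
      (hst.genMinor_update_comp_rev_mem hs.injective hmem hmove.ne.symm hblock) hM

end Exchange

variable {κ : Type*} {a a' b b' d : κ → ℕ}

theorem IsGroebnerBasis.exists_hasAntidiagChain (hord : IsAntidiagonalOrder m n ord)
    (hd : ∀ i, 0 < d i) {Idl : Ideal (MvPolynomial (Fin m × Fin n) ℂ)}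
    (hG : IsGroebnerBasis ord Idl (⋃ i, minorsOfSub m n (a i) (a' i) (b i) (b' i) (d i)))
    (hM : M ∈ matLT ord Idl) :
    ∃ i, HasAntidiagChain (fun r s => M r s ≠ 0) (d i) (window m (a i) (a' i))
      (window n (b i) (b' i)) := by
  rw [matLT, Set.mem_ofPred_eq, hG.2, monomial_mem_span_init_iff] at hM
  obtain ⟨g, hg, hinit⟩ := hM
  obtain ⟨i, hi⟩ := Set.mem_iUnion.1 hg
  exact ⟨i, (exists_minor_init_le_iff hord (hd i)).1 ⟨g, hi, hinit⟩⟩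

theorem IsGroebnerBasis.isBicrystalline (hord : IsAntidiagonalOrder m n ord)
    (hd : ∀ i, 0 < d i) {Idl : Ideal (MvPolynomial (Fin m × Fin n) ℂ)}
    (hG : IsGroebnerBasis ord Idl (⋃ i, minorsOfSub m n (a i) (a' i) (b i) (b' i) (d i)))
    (hst : LeviStable I J Idl) : IsBicrystalline m n I J ord Idl := by
  refine ⟨hst, fun φ hφ M hM N hN hNI => hM ?_⟩
  obtain ⟨i, hchain⟩ := hG.exists_hasAntidiagChain hord hd hNI
  have hminors := (Set.subset_iUnion _ i).trans hG.1
  obtain ⟨src, tgt, hblock, hmove⟩ | ⟨src, tgt, hblock, hmove⟩ := hφ.exists_isCrystalMove hN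
  · exact hmove.mem_matLT_of_row hord hst (hd i) hminors hblock hchain
  · exact hmove.mem_matLT_of_col hord hst (hd i) hminors hblock hchain

end Bicrystals

end GCS

open GCS in
theorem knutsonDeterminantal_groebner_and_bicrystalline_general
    {m n : ℕ} {κ : Type*} {a a' b b' d : κ → ℕ} (hd : ∀ i, 0 < d i)
    (hjust : ∀ i, IsJustified m n (a i) (a' i) (b i) (b' i))
    {G : Set (MvPolynomial (Fin m × Fin n) ℂ)}
    (hG : G = ⋃ i, minorsOfSub m n (a i) (a' i) (b i) (b' i) (d i))
    {ord : TermOrder (Fin m × Fin n)} (hord : IsAntidiagonalOrder m n ord) :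
    IsGroebnerBasis ord (Ideal.span G) G ∧
    ∀ I J : Finset ℕ, LeviStable I J (Ideal.span G) →
      IsBicrystalline m n I J ord (Ideal.span G) := by
  subst hG
  have hbasis := isGroebnerBasis_minors_of_isJustified hord hd hjust
  exact ⟨hbasis, fun I J hstable => hbasis.isBicrystalline hord hd hstable⟩

open GCS in
/-- Theorem `knutsonbicrystal`: for a Knutson determinantal ideal
(each defining submatrix is northwest-justified, southeast-justified, a set of consecutive
columns, or a set of consecutive rows), the defining minors form a Gröbner basis with
respect to the antidiagonal lexicographic order determined by
`z_{1n} ≻ ⋯ ≻ z_{11} ≻ z_{2n} ≻ ⋯ ≻ z_{m1}`, and consequently the ideal is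
`(𝐈,𝐉,≺)`-bicrystalline for every Levi datum under which it is stable. -/
theorem knutsonDeterminantal_groebner_and_bicrystalline
    (m n k : ℕ) (a a' b b' d : Fin k → ℕ) (hd : ∀ i, 0 < d i)
    (hbnd : ∀ i, 1 ≤ a i ∧ a i ≤ a' i ∧ a' i ≤ m ∧ 1 ≤ b i ∧ b i ≤ b' i ∧ b' i ≤ n)
    (hform : ∀ i, (a i = 1 ∧ b i = 1) ∨ (a' i = m ∧ b' i = n) ∨
      (a i = 1 ∧ a' i = m) ∨ (b i = 1 ∧ b' i = n))
    (G : Set (MvPolynomial (Fin m × Fin n) ℂ))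
    (hG : G = ⋃ i, minorsOfSub m n (a i) (a' i) (b i) (b' i) (d i))
    (ord : TermOrder (Fin m × Fin n)) (hord : IsAntidiagLex m n ord) :
    IsGroebnerBasis ord (Ideal.span G) G ∧
    ∀ I J : Finset ℕ, IsLeviDatum m I → IsLeviDatum n J →
      LeviStable I J (Ideal.span G) →
      IsBicrystalline m n I J ord (Ideal.span G) := by
  have hjust (i : Fin k) : IsJustified m n (a i) (a' i) (b i) (b' i) := by
    have := hbnd i
    have := hform i
    unfold IsJustified
    omega
  obtain ⟨hbasis, hcrystal⟩ :=
    knutsonDeterminantal_groebner_and_bicrystalline_general hd hjust hG hord.isAntidiagonalOrder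
  exact ⟨hbasis, fun I J _ _ => hcrystal I J⟩
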